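/- arXiv:2505.01611 — 3 statements merged into one kernel-verified Lean document; each statement's English description precedes it below -/
import Mathlib

section
/- Let p ∈ (1, ∞). Write Ω = {(x, y) : x ∈ [a, b], φ₁(x) ≤ y ≤ φ₂(x)} with φ₁ convex and φ₂ concave on [a, b]. Suppose both vertical lines of support of Ω are angular, i.e. φ₁(a) = φ₂(a), φ₁(b) = φ₂(b), and the one-sided derivatives φ₁'(a+), φ₂'(a+), φ₁'(b−), φ₂'(b−) are all finite. Then there exists a constant M < ∞ such that ‖u_x‖_p ≤ M ‖u_y‖_p for every u ∈ 𝒰_Ω; that is, K_p(Ω) = sup{ ‖u_x‖_p / ‖u_y‖_p : u ∈ 𝒰_Ω, u ≢ 0 } < ∞. -/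
open Set MeasureTheory
open scoped ENNReal

/-- Partial derivative of `u` in the `x` direction (junk value where `u` is not
differentiable). -/
noncomputable def ux (u : ℝ × ℝ → ℝ) (z : ℝ × ℝ) : ℝ := fderiv ℝ u z (1, 0)

/-- Partial derivative of `u` in the `y` direction. -/
noncomputable def uy (u : ℝ × ℝ → ℝ) (z : ℝ × ℝ) : ℝ := fderiv ℝ u z (0, 1)

/-- Directional derivative of `u` in the direction `h`. -/
noncomputable def uh (h : ℝ × ℝ) (u : ℝ × ℝ → ℝ) (z : ℝ × ℝ) : ℝ := fderiv ℝ u z h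

/-- The class `𝒰_Ω`: continuous concave functions on `Ω` vanishing on the boundary,
with uniformly bounded gradient over all interior points where it exists. -/
def MemU (Ω : Set (ℝ × ℝ)) (u : ℝ × ℝ → ℝ) : Prop :=
  ContinuousOn u Ω ∧ ConcaveOn ℝ Ω u ∧ (∀ z ∈ frontier Ω, u z = 0) ∧
    ∃ C : ℝ, ∀ z ∈ interior Ω, ∀ g : (ℝ × ℝ) →L[ℝ] ℝ, HasFDerivAt u g z → ‖g‖ ≤ C

/-- The `L¹` norm of `f` over `Ω`. -/
noncomputable def L1N (Ω : Set (ℝ × ℝ)) (f : ℝ × ℝ → ℝ) : ℝ := ∫ z in Ω, |f z|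

/-- The `L^p` norm of `f` over `Ω`, `p ∈ [1, ∞)`. -/
noncomputable def LpN (Ω : Set (ℝ × ℝ)) (p : ℝ) (f : ℝ × ℝ → ℝ) : ℝ :=
  (∫ z in Ω, |f z| ^ p) ^ (1 / p)

/-- The `L^∞` norm (essential supremum) of `f` over `Ω`. -/
noncomputable def LinfN (Ω : Set (ℝ × ℝ)) (f : ℝ × ℝ → ℝ) : ℝ≥0∞ :=
  essSup (fun z => ENNReal.ofReal |f z|) (volume.restrict Ω)

/-- The width of `Ω` parallel to the (Euclidean unit) vector `h`: the distance between the
two lines of support of `Ω` parallel to `h`, i.e. the oscillation over `Ω` of the linear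
functional given by the unit normal `(-h.2, h.1)` to `h`. -/
noncomputable def widthPar (Ω : Set (ℝ × ℝ)) (h : ℝ × ℝ) : ℝ :=
  sSup ((fun z : ℝ × ℝ => -h.2 * z.1 + h.1 * z.2) '' Ω) -
    sInf ((fun z : ℝ × ℝ => -h.2 * z.1 + h.1 * z.2) '' Ω)

/-!
A concave `u` lies below its tangent planes. Evaluating the tangent plane at an interior point `z`
at the contact points `ξ`, `η` of the two angular lines of support, where `u` vanishes, bounds
`|u_x z|` by the slope `L` of the cones containing `Ω` times `|u_y z|`, plus `u z` divided by the
horizontal distance to `ξ` or `η`. Since `Ω` lies in those cones, that distance is at least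
proportional to the length of the vertical chord through `z`. As `u` vanishes at both ends of the
chord, `u z` is at most half the integral of `|u_y|` along it, so `|u_x z|` is at most `L` times
`|u_y z|` plus the mean of `|u_y|` over the chord. Jensen's inequality on each chord, followed by
Fubini's theorem, gives the constant `2 * L`.
-/

open Filter
open scoped NNReal

lemma le_add_of_concaveOn_of_hasFDerivWithinAt {E : Type*} [NormedAddCommGroup E]
    [NormedSpace ℝ E] {s : Set E} {u : E → ℝ} (hu : ConcaveOn ℝ s u) {z w : E} (hz : z ∈ s)
    (hw : w ∈ s) {g : E →L[ℝ] ℝ} (hg : HasFDerivWithinAt u g s z) : u w ≤ u z + g (w - z) := by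
  let γ : ℝ →ᵃ[ℝ] E := AffineMap.lineMap z w
  have hderiv : HasDerivWithinAt (u ∘ γ) (g (w - z)) (γ ⁻¹' s) 0 :=
    HasFDerivWithinAt.comp_hasDerivWithinAt (t := s) (0 : ℝ) (by simpa [γ] using hg)
      AffineMap.hasDerivWithinAt_lineMap (mapsTo_preimage _ _)
  have hslope := (hu.comp_affineMap γ).slope_le_of_hasDerivWithinAt (x := 0) (y := 1)
    (by simpa [γ] using hz) (by simpa [γ] using hw) one_pos hderiv
  simp only [γ, slope_def_field, Function.comp_apply, AffineMap.lineMap_apply_one,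
    AffineMap.lineMap_apply_zero, sub_zero, div_one] at hslope
  linarith

lemma ae_differentiableAt_of_concaveOn {E : Type*} [NormedAddCommGroup E] [NormedSpace ℝ E]
    [FiniteDimensional ℝ E] [MeasurableSpace E] [BorelSpace E] (μ : Measure E)
    [μ.IsAddHaarMeasure] {s : Set E} {u : E → ℝ} (hu : ConcaveOn ℝ s u) :
    ∀ᵐ z ∂μ, z ∈ interior s → DifferentiableAt ℝ u z := by
  rw [ae_iff]
  refine measure_null_of_locally_null _ fun z hz => ?_
  simp only [mem_ofPred_eq, Classical.not_imp] at hz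
  obtain ⟨K, t, ht, hK⟩ := hu.locallyLipschitzOn_interior hz.1
  rw [isOpen_interior.nhdsWithin_eq hz.1] at ht
  refine ⟨_, inter_mem self_mem_nhdsWithin
    (mem_nhdsWithin_of_mem_nhds (interior_mem_nhds.2 ht)), ?_⟩
  refine measure_mono_null ?_ (ae_iff.1 (hK.ae_differentiableWithinAt_of_mem (μ := μ)))
  rintro w ⟨hw, hwt⟩ hdiff
  simp only [mem_ofPred_eq, Classical.not_imp] at hw
  exact hw.2 ((hdiff (interior_subset hwt)).differentiableAt (mem_interior_iff_mem_nhds.1 hwt))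

lemma integral_eq_sub_of_concaveOn_of_ae_hasDerivAt {f g : ℝ → ℝ} {c d : ℝ} (hcd : c ≤ d)
    (hf : ConcaveOn ℝ (Icc c d) f) (hcont : ContinuousOn f (Icc c d))
    (hg : IntervalIntegrable g volume c d)
    (hderiv : ∀ᵐ y, y ∈ Icc c d → HasDerivAt f (g y) y) :
    ∫ y in c..d, g y = f d - f c := by
  -- A concave function has a right derivative at every interior point, unlike a derivative.
  let r : ℝ → ℝ := fun t => -derivWithin (-f) (Ioi t) t
  have hr : ∀ t ∈ Ioo c d, HasDerivWithinAt f (r t) (Ioi t) t := fun t ht => by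
    simpa [r] using
      (hf.neg.hasDerivWithinAt_rightDeriv_of_mem_interior (by rwa [interior_Icc])).neg
  have hgr : g =ᵐ[volume.restrict (uIoc c d)] r := by
    rw [uIoc_of_le hcd, EventuallyEq, ae_restrict_iff' measurableSet_Ioc]
    filter_upwards [hderiv, compl_mem_ae_iff.2 (measure_singleton d)] with t ht htd htm
    exact (uniqueDiffWithinAt_Ioi t).eq_deriv _ (ht (Ioc_subset_Icc_self htm)).hasDerivWithinAt
      (hr t ⟨htm.1, lt_of_le_of_ne htm.2 htd⟩)
  rw [intervalIntegral.integral_congr_ae_restrict hgr]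
  exact intervalIntegral.integral_eq_sub_of_hasDeriv_right_of_le hcd hcont hr (hg.congr_ae hgr)

lemma two_mul_le_setIntegral_abs_of_concaveOn {f g : ℝ → ℝ} {c d y : ℝ}
    (hf : ConcaveOn ℝ (Icc c d) f) (hcont : ContinuousOn f (Icc c d)) (hc : f c = 0)
    (hd : f d = 0) (hg : IntegrableOn g (Icc c d))
    (hderiv : ∀ᵐ t, t ∈ Icc c d → HasDerivAt f (g t) t) (hy : y ∈ Icc c d) :
    2 * f y ≤ ∫ t in Icc c d, |g t| := by
  have hsub {a b : ℝ} (hac : c ≤ a) (hab : a ≤ b) (hbd : b ≤ d) :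
      IntervalIntegrable g volume a b ∧ ∫ t in a..b, g t = f b - f a := by
    have hIcc : Icc a b ⊆ Icc c d := Icc_subset_Icc hac hbd
    have hgi : IntervalIntegrable g volume a b :=
      (intervalIntegrable_iff_integrableOn_Icc_of_le hab).2 (hg.mono_set hIcc)
    exact ⟨hgi, integral_eq_sub_of_concaveOn_of_ae_hasDerivAt hab
      (hf.subset hIcc (convex_Icc a b)) (hcont.mono hIcc) hgi
      (hderiv.mono fun t ht htm => ht (hIcc htm))⟩
  obtain ⟨hgl, hleft⟩ := hsub le_rfl hy.1 hy.2
  obtain ⟨hgr, hright⟩ := hsub hy.1 hy.2 le_rfl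
  calc 2 * f y = (∫ t in c..y, g t) - ∫ t in y..d, g t := by rw [hleft, hright, hc, hd]; ring
    _ ≤ |∫ t in c..y, g t| + |∫ t in y..d, g t| := (le_abs_self _).trans (abs_sub _ _)
    _ ≤ (∫ t in c..y, |g t|) + ∫ t in y..d, |g t| := add_le_add
        (intervalIntegral.abs_integral_le_integral_abs hy.1)
        (intervalIntegral.abs_integral_le_integral_abs hy.2)
    _ = ∫ t in Icc c d, |g t| := by
        rw [intervalIntegral.integral_add_adjacent_intervals hgl.abs hgr.abs,
          intervalIntegral.integral_of_le (hy.1.trans hy.2), integral_Icc_eq_integral_Ioc]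

section PowerMean

variable {α : Type*} [MeasurableSpace α] {μ : Measure α} [IsFiniteMeasure μ] {p : ℝ}
  {g h : α → ℝ}

lemma integrable_abs_rpow_of_memLp (hp : 0 < p) (hg : MemLp g (ENNReal.ofReal p) μ) :
    Integrable (fun t => |g t| ^ p) μ := by
  simpa [hp.le] using hg.integrable_norm_rpow'

lemma measureReal_mul_average_abs_rpow_le (hp : 1 ≤ p) (hg : MemLp g (ENNReal.ofReal p) μ) :
    μ.real univ * (⨍ t, |g t| ∂μ) ^ p ≤ ∫ t, |g t| ^ p ∂μ := by
  rcases eq_zero_or_neZero μ with rfl | _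
  · simp
  have hp0 : 0 < p := one_pos.trans_le hp
  have hjensen := (convexOn_rpow hp).map_average_le (μ := μ) (f := fun t => |g t|)
    (Real.continuous_rpow_const hp0.le).continuousOn isClosed_Ici
    (ae_of_all _ fun t => abs_nonneg (g t)) (hg.integrable (by simpa using hp)).abs
    (integrable_abs_rpow_of_memLp hp0 hg)
  calc μ.real univ * (⨍ t, |g t| ∂μ) ^ p ≤ μ.real univ * ⨍ t, |g t| ^ p ∂μ := by gcongr
    _ = ∫ t, |g t| ^ p ∂μ := measure_smul_average μ _

lemma integral_abs_rpow_le_of_abs_le_add_average {L : ℝ} (hp : 1 ≤ p) (hL : 0 ≤ L)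
    (hg : MemLp g (ENNReal.ofReal p) μ)
    (hh : ∀ᵐ t ∂μ, |h t| ≤ L * (|g t| + ⨍ s, |g s| ∂μ)) :
    ∫ t, |h t| ^ p ∂μ ≤ (2 * L) ^ p * ∫ t, |g t| ^ p ∂μ := by
  have hgp := integrable_abs_rpow_of_memLp (one_pos.trans_le hp) hg
  have hmean := measureReal_mul_average_abs_rpow_le hp hg
  set m := ⨍ s, |g s| ∂μ
  have hm : 0 ≤ m := integral_nonneg fun s => abs_nonneg (g s)
  have hpoint (t : α) (ht : |h t| ≤ L * (|g t| + m)) :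
      |h t| ^ p ≤ (2 * L) ^ p / 2 * (|g t| ^ p + m ^ p) :=
    calc |h t| ^ p ≤ (1 / 2 * (2 * L * |g t|) + 1 / 2 * (2 * L * m)) ^ p := by
          gcongr
          linarith
      _ ≤ 1 / 2 * (2 * L * |g t|) ^ p + 1 / 2 * (2 * L * m) ^ p :=
          (convexOn_rpow hp).2 (mem_Ici.2 (by positivity)) (mem_Ici.2 (by positivity))
            (by norm_num) (by norm_num) (by norm_num)
      _ = (2 * L) ^ p / 2 * (|g t| ^ p + m ^ p) := by
          rw [Real.mul_rpow (by positivity) (abs_nonneg _), Real.mul_rpow (by positivity) hm]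
          ring
  calc ∫ t, |h t| ^ p ∂μ ≤ ∫ t, (2 * L) ^ p / 2 * (|g t| ^ p + m ^ p) ∂μ :=
        integral_mono_of_nonneg (ae_of_all _ fun t => by positivity)
          ((hgp.add (integrable_const _)).const_mul _) (hh.mono hpoint)
    _ = (2 * L) ^ p / 2 * ((∫ t, |g t| ^ p ∂μ) + μ.real univ * m ^ p) := by
        rw [integral_const_mul, integral_add hgp (integrable_const _), integral_const,
          smul_eq_mul]
    _ ≤ (2 * L) ^ p / 2 * ((∫ t, |g t| ^ p ∂μ) + ∫ t, |g t| ^ p ∂μ) := by gcongr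
    _ = (2 * L) ^ p * ∫ t, |g t| ^ p ∂μ := by ring

end PowerMean

section Slices

variable {α β : Type*} [MeasurableSpace α] [MeasurableSpace β] {μ : Measure α} {ν : Measure β}
  {s : Set (α × β)} {F G : α × β → ℝ}

lemma integral_indicator_prodMk (hs : MeasurableSet s) (F : α × β → ℝ) (x : α) :
    ∫ y, s.indicator F (x, y) ∂ν = ∫ y in Prod.mk x ⁻¹' s, F (x, y) ∂ν :=
  integral_indicator (f := fun y => F (x, y)) (measurable_prodMk_left hs)

lemma integrable_setIntegral_slice [SFinite ν] (hs : MeasurableSet s)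
    (hF : IntegrableOn F s (μ.prod ν)) :
    Integrable (fun x => ∫ y in Prod.mk x ⁻¹' s, F (x, y) ∂ν) μ := by
  simpa only [integral_indicator_prodMk hs] using
    ((integrable_indicator_iff hs).2 hF).integral_prod_left

lemma setIntegral_eq_integral_setIntegral_slice [SFinite μ] [SFinite ν]
    (hs : MeasurableSet s) (hF : IntegrableOn F s (μ.prod ν)) :
    ∫ z in s, F z ∂μ.prod ν = ∫ x, ∫ y in Prod.mk x ⁻¹' s, F (x, y) ∂ν ∂μ := by
  rw [← integral_indicator hs, integral_prod _ ((integrable_indicator_iff hs).2 hF)]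
  simp only [integral_indicator_prodMk hs]

lemma setIntegral_le_mul_setIntegral_of_ae_slice [SFinite μ] [SFinite ν] {K : ℝ}
    (hs : MeasurableSet s) (hF : IntegrableOn F s (μ.prod ν)) (hG : IntegrableOn G s (μ.prod ν))
    (hle : ∀ᵐ x ∂μ, ∫ y in Prod.mk x ⁻¹' s, F (x, y) ∂ν ≤
      K * ∫ y in Prod.mk x ⁻¹' s, G (x, y) ∂ν) :
    ∫ z in s, F z ∂μ.prod ν ≤ K * ∫ z in s, G z ∂μ.prod ν := by
  rw [setIntegral_eq_integral_setIntegral_slice hs hF,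
    setIntegral_eq_integral_setIntegral_slice hs hG, ← integral_const_mul]
  exact integral_mono_ae (integrable_setIntegral_slice hs hF)
    ((integrable_setIntegral_slice hs hG).const_mul K) hle

end Slices

lemma subsingleton_or_exists_eq_Icc_of_isCompact_of_convex {s : Set ℝ} (hs : IsCompact s)
    (hconv : Convex ℝ s) : s.Subsingleton ∨ ∃ c d, c < d ∧ s = Icc c d := by
  refine s.subsingleton_or_nontrivial.imp_right fun hnt => ?_
  have hIcc := eq_Icc_of_connected_compact ⟨hnt.nonempty, hconv.isPreconnected⟩ hs
  rw [hIcc, ← not_subsingleton_iff, subsingleton_Icc_iff, not_le] at hnt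
  exact ⟨_, _, hnt, hIcc⟩

lemma memLp_fderiv_comp_apply {α E : Type*} [MeasurableSpace α] [NormedAddCommGroup E]
    [NormedSpace ℝ E] [MeasurableSpace E] [BorelSpace E] {μ : Measure α} [IsFiniteMeasure μ]
    {u : E → ℝ} {f : α → E} (hf : Measurable f) {C : ℝ} (hC : ∀ᵐ t ∂μ, ‖fderiv ℝ u (f t)‖ ≤ C)
    (v : E) (q : ℝ≥0∞) : MemLp (fun t => fderiv ℝ u (f t) v) q μ :=
  .of_bound ((measurable_fderiv_apply_const ℝ u v).comp hf).aestronglyMeasurable (C * ‖v‖)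
    (hC.mono fun _ ht => (fderiv ℝ u _).le_of_opNorm_le ht v)

/-- `ξ` is the contact point of an angular vertical line of support of `Ω`, quantitatively: `Ω`
lies in the double cone with apex `ξ` formed by the lines of slope in `[-L, L]` through `ξ`. That
the vertical line through `ξ` has `Ω` on one side is not part of the definition. -/
def IsAngularPoint (Ω : Set (ℝ × ℝ)) (L : ℝ≥0) (ξ : ℝ × ℝ) : Prop :=
  ξ ∈ Ω ∧ ∀ z ∈ Ω, |z.2 - ξ.2| ≤ L * |z.1 - ξ.1|

variable {Ω : Set (ℝ × ℝ)} {u : ℝ × ℝ → ℝ} {L : ℝ≥0} {ξ η : ℝ × ℝ} {x y c d p : ℝ}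

lemma fderiv_eq_ux_mul_add_uy_mul (u : ℝ × ℝ → ℝ) (z v : ℝ × ℝ) :
    fderiv ℝ u z v = ux u z * v.1 + uy u z * v.2 := by
  have hv : v = v.1 • ((1 : ℝ), (0 : ℝ)) + v.2 • ((0 : ℝ), (1 : ℝ)) := by ext <;> simp
  conv_lhs => rw [hv]
  simp only [map_add, map_smul, smul_eq_mul, ux, uy, mul_comm]

lemma hasDerivAt_uy (h : DifferentiableAt ℝ u (x, y)) :
    HasDerivAt (fun t => u (x, t)) (uy u (x, y)) y :=
  h.hasFDerivAt.comp_hasDerivAt y ((hasDerivAt_const y x).prodMk (hasDerivAt_id y))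

lemma isAngularPoint_of_convexOn_of_concaveOn {s : Set ℝ} {φ₁ φ₂ : ℝ → ℝ} {e d₁ d₂ : ℝ}
    (hφ₁ : ConvexOn ℝ s φ₁) (hφ₂ : ConcaveOn ℝ s φ₂) (he : e ∈ s) (heq : φ₁ e = φ₂ e)
    (hd₁ : HasDerivWithinAt φ₁ d₁ s e) (hd₂ : HasDerivWithinAt φ₂ d₂ s e)
    (hL₁ : ‖d₁‖₊ ≤ L) (hL₂ : ‖d₂‖₊ ≤ L) :
    IsAngularPoint {z | z.1 ∈ s ∧ z.2 ∈ Icc (φ₁ z.1) (φ₂ z.1)} L (e, φ₁ e) := by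
  refine ⟨⟨he, le_rfl, heq.le⟩, fun z ⟨hz, hlower, hupper⟩ => ?_⟩
  have hbound {d : ℝ} (hd : ‖d‖₊ ≤ L) : |d * (z.1 - e)| ≤ L * |z.1 - e| := by
    rw [abs_mul]
    gcongr
    exact hd
  have htangent₁ := le_add_of_concaveOn_of_hasFDerivWithinAt hφ₁.neg he hz
    hd₁.neg.hasFDerivWithinAt
  have htangent₂ := le_add_of_concaveOn_of_hasFDerivWithinAt hφ₂ he hz hd₂.hasFDerivWithinAt
  simp only [ContinuousLinearMap.toSpanSingleton_apply, smul_eq_mul, Pi.neg_apply]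
    at htangent₁ htangent₂
  rw [abs_le]
  constructor
  · linarith [(abs_le.1 (hbound hL₁)).1]
  · linarith [(abs_le.1 (hbound hL₂)).2]

namespace IsAngularPoint

lemma preimage_prodMk (hξ : IsAngularPoint Ω L ξ) : Prod.mk ξ.1 ⁻¹' Ω = {ξ.2} := by
  refine eq_singleton_iff_unique_mem.2 ⟨hξ.1, fun y hy => ?_⟩
  simpa [sub_eq_zero] using hξ.2 _ hy

lemma sub_le (hξ : IsAngularPoint Ω L ξ) (hc : (x, c) ∈ Ω) (hd : (x, d) ∈ Ω) :
    d - c ≤ 2 * (L * |x - ξ.1|) := by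
  linarith [(abs_le.1 (hξ.2 _ hc)).1, (abs_le.1 (hξ.2 _ hd)).2]

lemma ux_mul_sub_le (hξ : IsAngularPoint Ω L ξ) (hu : ConcaveOn ℝ Ω u) (hu0 : u ξ = 0)
    (hc : (x, c) ∈ Ω) (hd : (x, d) ∈ Ω) (hy : (x, y) ∈ Ω) (hdiff : DifferentiableAt ℝ u (x, y))
    {m : ℝ} (hm : 0 ≤ m) (hum : 2 * u (x, y) ≤ m * (d - c)) :
    ux u (x, y) * (x - ξ.1) ≤ L * (|uy u (x, y)| + m) * |x - ξ.1| := by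
  have htangent := le_add_of_concaveOn_of_hasFDerivWithinAt hu hy hξ.1
    hdiff.hasFDerivAt.hasFDerivWithinAt
  rw [fderiv_eq_ux_mul_add_uy_mul, hu0] at htangent
  have hvertical : uy u (x, y) * (ξ.2 - y) ≤ |uy u (x, y)| * (L * |x - ξ.1|) :=
    calc uy u (x, y) * (ξ.2 - y) ≤ |uy u (x, y)| * |y - ξ.2| := by
          rw [abs_sub_comm, ← abs_mul]
          exact le_abs_self _
      _ ≤ |uy u (x, y)| * (L * |x - ξ.1|) := by gcongr; exact hξ.2 _ hy
  have hvalue : 2 * u (x, y) ≤ m * (2 * (L * |x - ξ.1|)) :=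
    hum.trans (by gcongr; exact hξ.sub_le hc hd)
  simp only [Prod.fst_sub, Prod.snd_sub] at htangent
  linarith

lemma abs_ux_le (hξ : IsAngularPoint Ω L ξ) (hη : IsAngularPoint Ω L η)
    (hu : ConcaveOn ℝ Ω u) (hξ0 : u ξ = 0) (hη0 : u η = 0) (hx : x ∈ Icc ξ.1 η.1) (hcd : c < d)
    (hc : (x, c) ∈ Ω) (hd : (x, d) ∈ Ω) (hy : (x, y) ∈ Ω) (hdiff : DifferentiableAt ℝ u (x, y))
    {m : ℝ} (hm : 0 ≤ m) (hum : 2 * u (x, y) ≤ m * (d - c)) :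
    |ux u (x, y)| ≤ L * (|uy u (x, y)| + m) := by
  have hpos {ζ : ℝ × ℝ} (hζ : IsAngularPoint Ω L ζ) : 0 < |x - ζ.1| := by
    refine pos_of_mul_pos_right (a := (L : ℝ)) ?_ L.2
    linarith [hζ.sub_le hc hd]
  have hleft := hξ.ux_mul_sub_le hu hξ0 hc hd hy hdiff hm hum
  have hright := hη.ux_mul_sub_le hu hη0 hc hd hy hdiff hm hum
  have hsξ := hpos hξ
  have hsη := hpos hη
  rw [abs_of_nonneg (sub_nonneg.2 hx.1)] at hleft hsξ
  rw [abs_of_nonpos (sub_nonpos.2 hx.2)] at hright hsη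
  exact abs_le'.2 ⟨le_of_mul_le_mul_right hleft hsξ,
    le_of_mul_le_mul_right (by linarith) hsη⟩

end IsAngularPoint

namespace MemU

lemma eq_zero_of_mem_frontier_slice (hu : MemU Ω u) (hy : y ∈ frontier (Prod.mk x ⁻¹' Ω)) :
    u (x, y) = 0 :=
  hu.2.2.1 _ ((Continuous.prodMk_right x).frontier_preimage_subset Ω hy)

lemma eq_zero_of_isAngularPoint (hu : MemU Ω u) (hξ : IsAngularPoint Ω L ξ) : u ξ = 0 :=
  hu.eq_zero_of_mem_frontier_slice (by simp [hξ.preimage_prodMk, frontier])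

lemma exists_ae_differentiableAt_and_norm_fderiv_le (hu : MemU Ω u) :
    ∃ C, ∀ᵐ z, z ∈ Ω → DifferentiableAt ℝ u z ∧ ‖fderiv ℝ u z‖ ≤ C := by
  obtain ⟨-, hconc, -, C, hC⟩ := hu
  refine ⟨C, ?_⟩
  filter_upwards [ae_differentiableAt_of_concaveOn volume hconc,
    compl_mem_ae_iff.2 (hconc.1.addHaar_frontier volume)] with z hdiff hfrontier hz
  have hint : z ∈ interior Ω := by
    by_contra h
    exact hfrontier ((mem_frontier_iff_notMem_interior hz).2 h)
  exact ⟨hdiff hint, hC z hint _ (hdiff hint).hasFDerivAt⟩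

lemma integrableOn_abs_fderiv_apply_rpow (hu : MemU Ω u) (hΩ : IsCompact Ω) (hp : 0 < p)
    (v : ℝ × ℝ) : IntegrableOn (fun z => |fderiv ℝ u z v| ^ p) Ω := by
  have : IsFiniteMeasure (volume.restrict Ω) := ⟨by simpa using hΩ.measure_lt_top⟩
  obtain ⟨C, hC⟩ := hu.exists_ae_differentiableAt_and_norm_fderiv_le
  refine integrable_abs_rpow_of_memLp hp (memLp_fderiv_comp_apply measurable_id (C := C) ?_ v _)
  exact (ae_restrict_iff' hΩ.measurableSet).2 (hC.mono fun z hz hzΩ => (hz hzΩ).2)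

lemma concaveOn_slice (hu : MemU Ω u) (x : ℝ) :
    ConcaveOn ℝ (Prod.mk x ⁻¹' Ω) fun y => u (x, y) :=
  hu.2.1.comp_affineMap ((AffineMap.const ℝ ℝ x).prod (AffineMap.id ℝ ℝ))

lemma two_mul_le_setIntegral_abs_uy (hu : MemU Ω u) (hcd : Prod.mk x ⁻¹' Ω = Icc c d)
    (hdiff : ∀ᵐ t, (x, t) ∈ Ω → DifferentiableAt ℝ u (x, t))
    (hint : IntegrableOn (fun t => uy u (x, t)) (Icc c d)) (hy : y ∈ Icc c d) :
    2 * u (x, y) ≤ ∫ t in Icc c d, |uy u (x, t)| := by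
  have hle : c ≤ d := hy.1.trans hy.2
  have hmem {t : ℝ} (ht : t ∈ Icc c d) : (x, t) ∈ Ω := hcd.ge ht
  have hzero {t : ℝ} (ht : t ∈ ({c, d} : Set ℝ)) : u (x, t) = 0 :=
    hu.eq_zero_of_mem_frontier_slice (by rwa [hcd, frontier_Icc hle])
  exact two_mul_le_setIntegral_abs_of_concaveOn (f := fun t => u (x, t))
    (hcd ▸ hu.concaveOn_slice x) (hu.1.comp (by fun_prop) fun _ => hmem) (hzero (by simp))
    (hzero (by simp)) hint (hdiff.mono fun t ht htm => hasDerivAt_uy (ht (hmem htm))) hy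

lemma setIntegral_slice_abs_ux_rpow_le_of_eq_Icc (hu : MemU Ω u) (hp : 1 ≤ p)
    (hξ : IsAngularPoint Ω L ξ) (hη : IsAngularPoint Ω L η) (hx : x ∈ Icc ξ.1 η.1) (hlt : c < d)
    (hcd : Prod.mk x ⁻¹' Ω = Icc c d) {C : ℝ}
    (hC : ∀ᵐ y, (x, y) ∈ Ω → DifferentiableAt ℝ u (x, y) ∧ ‖fderiv ℝ u (x, y)‖ ≤ C) :
    ∫ y in Icc c d, |ux u (x, y)| ^ p ≤ (2 * L) ^ p * ∫ y in Icc c d, |uy u (x, y)| ^ p := by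
  have hmem {t : ℝ} (ht : t ∈ Icc c d) : (x, t) ∈ Ω := hcd.ge ht
  have hLp (q : ℝ≥0∞) : MemLp (fun t => uy u (x, t)) q (volume.restrict (Icc c d)) :=
    memLp_fderiv_comp_apply measurable_prodMk_left ((ae_restrict_iff' measurableSet_Icc).2
      (hC.mono fun t ht htm => (ht (hmem htm)).2)) (0, 1) q
  refine integral_abs_rpow_le_of_abs_le_add_average hp L.2 (hLp _) ?_
  rw [ae_restrict_iff' measurableSet_Icc]
  filter_upwards [hC] with y hy hym
  have hchord := hu.two_mul_le_setIntegral_abs_uy hcd (hC.mono fun t ht htm => (ht htm).1)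
    (memLp_one_iff_integrable.1 (hLp 1)) hym
  refine hξ.abs_ux_le hη hu.2.1 (hu.eq_zero_of_isAngularPoint hξ) (hu.eq_zero_of_isAngularPoint hη)
    hx hlt (hmem (left_mem_Icc.2 hlt.le)) (hmem (right_mem_Icc.2 hlt.le)) (hmem hym)
    (hy (hmem hym)).1 (integral_nonneg fun t => abs_nonneg _) ?_
  rw [← measure_smul_setAverage _ measure_Icc_lt_top.ne] at hchord
  simpa [hlt.le, mul_comm] using hchord

lemma setIntegral_slice_abs_ux_rpow_le (hu : MemU Ω u) (hΩ : IsCompact Ω) (hp : 1 ≤ p)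
    (hξ : IsAngularPoint Ω L ξ) (hη : IsAngularPoint Ω L η)
    (hξη : ∀ z ∈ Ω, z.1 ∈ Icc ξ.1 η.1) {C : ℝ}
    (hC : ∀ᵐ y, (x, y) ∈ Ω → DifferentiableAt ℝ u (x, y) ∧ ‖fderiv ℝ u (x, y)‖ ≤ C) :
    ∫ y in Prod.mk x ⁻¹' Ω, |ux u (x, y)| ^ p ≤
      (2 * L) ^ p * ∫ y in Prod.mk x ⁻¹' Ω, |uy u (x, y)| ^ p := by
  have hcompact : IsCompact (Prod.mk x ⁻¹' Ω) :=
    (hΩ.image continuous_snd).of_isClosed_subset (hΩ.isClosed.preimage (by fun_prop))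
      fun y hy => ⟨(x, y), hy, rfl⟩
  rcases subsingleton_or_exists_eq_Icc_of_isCompact_of_convex hcompact (hu.concaveOn_slice x).1
    with hsub | ⟨c, d, hlt, hcd⟩
  · simp [Measure.restrict_eq_zero.2 (hsub.measure_zero volume)]
  · rw [hcd]
    exact hu.setIntegral_slice_abs_ux_rpow_le_of_eq_Icc hp hξ hη
      (hξη (x, c) (hcd.ge (left_mem_Icc.2 hlt.le))) hlt hcd hC

lemma setIntegral_abs_ux_rpow_le (hu : MemU Ω u) (hΩ : IsCompact Ω) (hp : 1 ≤ p)
    (hξ : IsAngularPoint Ω L ξ) (hη : IsAngularPoint Ω L η)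
    (hξη : ∀ z ∈ Ω, z.1 ∈ Icc ξ.1 η.1) :
    ∫ z in Ω, |ux u z| ^ p ≤ (2 * L) ^ p * ∫ z in Ω, |uy u z| ^ p := by
  have hint := hu.integrableOn_abs_fderiv_apply_rpow hΩ (one_pos.trans_le hp)
  obtain ⟨C, hC⟩ := hu.exists_ae_differentiableAt_and_norm_fderiv_le
  refine setIntegral_le_mul_setIntegral_of_ae_slice hΩ.measurableSet (hint (1, 0)) (hint (0, 1)) ?_
  filter_upwards [Measure.ae_ae_of_ae_prod hC] with x hx
  exact hu.setIntegral_slice_abs_ux_rpow_le hΩ hp hξ hη hξη hx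

end MemU

theorem stmt_13_general (hp : 1 ≤ p) (hΩ : IsCompact Ω) (hξ : IsAngularPoint Ω L ξ)
    (hη : IsAngularPoint Ω L η) (hξη : ∀ z ∈ Ω, z.1 ∈ Icc ξ.1 η.1) (hu : MemU Ω u) :
    LpN Ω p (ux u) ≤ 2 * L * LpN Ω p (uy u) := by
  have hp0 : p ≠ 0 := (one_pos.trans_le hp).ne'
  calc LpN Ω p (ux u) ≤ ((2 * L) ^ p * ∫ z in Ω, |uy u z| ^ p) ^ (1 / p) :=
        Real.rpow_le_rpow (integral_nonneg fun z => by positivity)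
          (hu.setIntegral_abs_ux_rpow_le hΩ hp hξ hη hξη) (by positivity)
    _ = 2 * L * LpN Ω p (uy u) := by
        rw [Real.mul_rpow (by positivity) (integral_nonneg fun z => by positivity), one_div,
          Real.rpow_rpow_inv (by positivity) hp0, LpN, one_div]

/-- Theorem 6, sufficiency: `p ∈ (1, ∞)`; if both vertical lines of support
of `Ω = {(x,y) : x ∈ [a,b], φ₁(x) ≤ y ≤ φ₂(x)}` are angular (`φ₁(a) = φ₂(a)`,
`φ₁(b) = φ₂(b)`, and the four one-sided derivatives exist as finite reals), then there is
a constant `M` with `‖u_x‖_p ≤ M ‖u_y‖_p` for all `u ∈ 𝒰_Ω`. -/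
theorem stmt_13 (p : ℝ) (hp : 1 < p)
    (a b : ℝ) (hab : a < b) (φ₁ φ₂ : ℝ → ℝ)
    (hφ₁ : ConvexOn ℝ (Icc a b) φ₁) (hφ₂ : ConcaveOn ℝ (Icc a b) φ₂)
    (hφle : ∀ x ∈ Icc a b, φ₁ x ≤ φ₂ x)
    (Ω : Set (ℝ × ℝ))
    (hΩ : Ω = {z : ℝ × ℝ | z.1 ∈ Icc a b ∧ z.2 ∈ Icc (φ₁ z.1) (φ₂ z.1)})
    (hΩc : IsCompact Ω) (hΩint : (interior Ω).Nonempty)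
    (heqa : φ₁ a = φ₂ a) (heqb : φ₁ b = φ₂ b)
    (d1a d2a d1b d2b : ℝ)
    (h1a : HasDerivWithinAt φ₁ d1a (Ici a) a) (h2a : HasDerivWithinAt φ₂ d2a (Ici a) a)
    (h1b : HasDerivWithinAt φ₁ d1b (Iic b) b) (h2b : HasDerivWithinAt φ₂ d2b (Iic b) b) :
    ∃ M : ℝ, ∀ u : ℝ × ℝ → ℝ, MemU Ω u → LpN Ω p (ux u) ≤ M * LpN Ω p (uy u) := by
  have ha := isAngularPoint_of_convexOn_of_concaveOn hφ₁ hφ₂ (left_mem_Icc.2 hab.le) heqa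
    (h1a.mono Icc_subset_Ici_self) (h2a.mono Icc_subset_Ici_self)
    (L := (‖d1a‖₊ ⊔ ‖d2a‖₊) ⊔ (‖d1b‖₊ ⊔ ‖d2b‖₊)) (by simp) (by simp)
  have hb := isAngularPoint_of_convexOn_of_concaveOn hφ₁ hφ₂ (right_mem_Icc.2 hab.le) heqb
    (h1b.mono Icc_subset_Iic_self) (h2b.mono Icc_subset_Iic_self)
    (L := (‖d1a‖₊ ⊔ ‖d2a‖₊) ⊔ (‖d1b‖₊ ⊔ ‖d2b‖₊)) (by simp) (by simp)
  subst hΩ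
  exact ⟨_, fun u hu => stmt_13_general hp.le hΩc ha hb (fun z hz => hz.1) hu⟩
end

section
/- Write Ω = {(x, y) : x ∈ [a, b], φ₁(x) ≤ y ≤ φ₂(x)} with φ₁ convex and φ₂ concave on [a, b], and let u ∈ 𝒰_Ω. For a boundary point (x₀, y₀) ∈ ∂Ω that is an endpoint of a nondegenerate horizontal segment Ω ∩ {y = y₀}, define u_x(x₀, y₀) as the one-sided derivative of the concave function x ↦ u(x, y₀) at x₀ taken from inside the segment (it exists and is finite since the gradient of u is uniformly bounded). Then ess sup_{(x,y)∈Ω} |u_x(x, y)| = sup |u_x(x₀, y₀)|, the supremum being taken over all boundary points (x₀, y₀) ∈ ∂Ω at which u_x is so defined. The analogous statement holds with u_x replaced by u_y and horizontal segments replaced by vertical segments. -/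
open Set MeasureTheory
open scoped ENNReal

/-!
Along a line, the derivative of a concave function is nonincreasing, so on a section of `Ω` its
modulus is dominated by the one-sided derivative at one of the endpoints; this bounds the essential
supremum from above. Conversely, let `K` be the essential supremum. At a dense set of points, `u`
lies below a tangent hyperplane whose slope in the given direction is at most `K` in modulus.
Passing to the limit, first to all interior points and then, by contracting towards an interior
point, to the boundary, `u` is `K`-Lipschitz along every line of that direction, including
the lines that meet `Ω` only in `∂Ω`. Hence its one-sided derivatives at endpoints are at most `K`
in modulus.
-/

open Filter Topology
open scoped NNReal

section LipschitzDerivative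

variable {𝕜 F : Type*} [NontriviallyNormedField 𝕜] [NormedAddCommGroup F] [NormedSpace 𝕜 F]
  {f : 𝕜 → F} {f' : F} {s : Set 𝕜} {x y : 𝕜} {K : ℝ≥0}

lemma norm_slope_le_of_lipschitzOnWith (hf : LipschitzOnWith K f s) (hx : x ∈ s) (hy : y ∈ s) :
    ‖slope f x y‖ ≤ K := by
  rw [slope_def_module, norm_smul, norm_inv]
  exact inv_mul_le_of_le_mul₀ (norm_nonneg _) K.coe_nonneg
    ((hf.norm_sub_le hy hx).trans_eq (mul_comm _ _))

lemma norm_le_of_hasDerivWithinAt_of_lipschitzOnWith (hs : UniqueDiffWithinAt 𝕜 s x) (hx : x ∈ s)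
    (hd : HasDerivWithinAt f f' s x) (hf : LipschitzOnWith K f s) : ‖f'‖ ≤ K := by
  have : NeBot (𝓝[s \ {x}] x) := accPt_principal_iff_nhdsWithin.1 hs.accPt
  refine le_of_tendsto (hasDerivWithinAt_iff_tendsto_slope.1 hd).norm ?_
  filter_upwards [self_mem_nhdsWithin] with y hy
  exact norm_slope_le_of_lipschitzOnWith hf hx hy.1

end LipschitzDerivative

section ConcaveOnInterval

variable {f : ℝ → ℝ} {a b t m : ℝ} {K : ℝ≥0}

lemma differentiableWithinAt_left_of_concaveOn_of_lipschitzOnWith (hab : a < b)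
    (hf : ConcaveOn ℝ (Icc a b) f) (hK : LipschitzOnWith K f (Icc a b)) :
    DifferentiableWithinAt ℝ f (Icc a b) a := by
  have ha : a ∈ Icc a b := left_mem_Icc.2 hab.le
  have hanti : AntitoneOn (slope f a) (Ioo a b) :=
    (hf.antitoneOn_slope_gt ha).mono fun x hx => ⟨Ioo_subset_Icc_self hx, hx.1⟩
  have hbdd : BddAbove (slope f a '' Ioo a b) := by
    refine ⟨K, forall_mem_image.2 fun x hx => (le_abs_self _).trans ?_⟩
    exact norm_slope_le_of_lipschitzOnWith hK ha (Ioo_subset_Icc_self hx)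
  have hlim := hanti.tendsto_nhdsWithin_Ioo_right (nonempty_Ioo.2 hab) hbdd
  rw [← nhdsWithin_Ioc_eq_nhdsGT hab, ← Icc_sdiff_left] at hlim
  exact (hasDerivWithinAt_iff_tendsto_slope.2 hlim).differentiableWithinAt

lemma differentiableWithinAt_right_of_concaveOn_of_lipschitzOnWith (hab : a < b)
    (hf : ConcaveOn ℝ (Icc a b) f) (hK : LipschitzOnWith K f (Icc a b)) :
    DifferentiableWithinAt ℝ f (Icc a b) b := by
  have hmaps : MapsTo Neg.neg (Icc (-b) (-a)) (Icc a b) := fun x hx =>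
    ⟨le_neg.2 hx.2, neg_le.2 hx.1⟩
  have hconc : ConcaveOn ℝ (Icc (-b) (-a)) (f ∘ Neg.neg) :=
    (hf.comp_linearMap (-LinearMap.id)).subset hmaps (convex_Icc _ _)
  have hLip : LipschitzOnWith K (f ∘ Neg.neg) (Icc (-b) (-a)) := by
    have hneg : LipschitzWith 1 (Neg.neg : ℝ → ℝ) := LipschitzWith.id.neg
    simpa only [mul_one] using hK.comp hneg.lipschitzOnWith hmaps
  have hdiff := differentiableWithinAt_left_of_concaveOn_of_lipschitzOnWith
    (neg_lt_neg hab) hconc hLip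
  have hmaps' : MapsTo Neg.neg (Icc a b) (Icc (-b) (-a)) := fun x hx =>
    ⟨neg_le_neg hx.2, neg_le_neg hx.1⟩
  simpa [Function.comp_def] using hdiff.comp b differentiableWithinAt_id.neg hmaps'

lemma exists_endpoint_abs_le_abs_of_concaveOn (hf : ConcaveOn ℝ (Icc a b) f)
    (hK : LipschitzOnWith K f (Icc a b)) (ht : t ∈ Ioo a b) (hm : HasDerivAt f m t) :
    ∃ x d, (x = a ∨ x = b) ∧ HasDerivWithinAt f d (Icc a b) x ∧ |m| ≤ |d| := by
  have hab : a < b := ht.1.trans ht.2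
  have ha : a ∈ Icc a b := left_mem_Icc.2 hab.le
  have hb : b ∈ Icc a b := right_mem_Icc.2 hab.le
  have htI : t ∈ Icc a b := Ioo_subset_Icc_self ht
  rcases le_total 0 m with hm₀ | hm₀
  · have hd := differentiableWithinAt_left_of_concaveOn_of_lipschitzOnWith hab hf hK
    refine ⟨a, _, Or.inl rfl, hd.hasDerivWithinAt, abs_le_abs_of_nonneg hm₀ ?_⟩
    exact (hf.le_slope_of_hasDerivAt ha htI ht.1 hm).trans (hf.slope_le_derivWithin ha htI ht.1 hd)
  · have hd := differentiableWithinAt_right_of_concaveOn_of_lipschitzOnWith hab hf hK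
    refine ⟨b, _, Or.inr rfl, hd.hasDerivWithinAt, abs_le_abs_of_nonpos hm₀ ?_⟩
    exact (hf.derivWithin_le_slope htI hb ht.2 hd).trans (hf.slope_le_of_hasDerivAt htI hb ht.2 hm)

end ConcaveOnInterval

lemma subset_closure_of_ae_restrict {X : Type*} [TopologicalSpace X] [MeasurableSpace X]
    [OpensMeasurableSpace X] {μ : Measure X} [μ.IsOpenPosMeasure] {U : Set X} {p : X → Prop}
    (hU : IsOpen U) (hp : ∀ᵐ z ∂μ.restrict U, p z) : U ⊆ closure (U ∩ {z | p z}) := by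
  rw [ae_restrict_iff' hU.measurableSet] at hp
  refine ((Measure.dense_of_ae hp).open_subset_closure_inter hU).trans (closure_mono ?_)
  exact fun z hz => ⟨hz.1, hz.2 hz.1⟩

section ConcaveOnConvexSet

variable {E : Type*} [NormedAddCommGroup E] [NormedSpace ℝ E] {Ω : Set E} {u : E → ℝ}

lemma le_add_fderiv_of_concaveOn (hu : ConcaveOn ℝ Ω u) {x h : E} (hx : x ∈ Ω) (hxh : x + h ∈ Ω)
    (hd : DifferentiableAt ℝ u x) : u (x + h) ≤ u x + fderiv ℝ u x h := by
  let ℓ : ℝ →ᵃ[ℝ] E := AffineMap.lineMap x (x + h)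
  have hℓ₀ : ℓ 0 = x := AffineMap.lineMap_apply_zero _ _
  have hℓ₁ : ℓ 1 = x + h := AffineMap.lineMap_apply_one _ _
  have hℓ : HasDerivAt ℓ h 0 := by
    simpa using AffineMap.hasDerivAt_lineMap (a := x) (b := x + h) (x := (0 : ℝ))
  have hder : HasDerivAt (u ∘ ℓ) (fderiv ℝ u x h) 0 :=
    hd.hasFDerivAt.comp_hasDerivAt_of_eq 0 hℓ hℓ₀.symm
  have hslope := (hu.comp_affineMap ℓ).slope_le_of_hasDerivAt (x := 0) (y := 1)
    (by rwa [mem_preimage, hℓ₀]) (by rwa [mem_preimage, hℓ₁]) one_pos hder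
  rw [slope_def_field, Function.comp_apply, Function.comp_apply, hℓ₀, hℓ₁, sub_zero, div_one]
    at hslope
  linarith

lemma tendsto_lineMap_nhdsWithin_interior (hΩ : Convex ℝ Ω) {x p : E} (hx : x ∈ Ω)
    (hp : p ∈ interior Ω) :
    Tendsto (AffineMap.lineMap x p : ℝ → E) (𝓝[>] 0) (𝓝[interior Ω] x) := by
  refine tendsto_nhdsWithin_iff.2 ⟨?_, ?_⟩
  · simpa using (AffineMap.lineMap_continuous (p := x) (q := p)).tendsto (0 : ℝ)
      |>.mono_left nhdsWithin_le_nhds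
  · filter_upwards [Ioo_mem_nhdsGT (zero_lt_one' ℝ)] with s hs
    exact hΩ.openSegment_self_interior_subset_interior hx hp (lineMap_mem_openSegment ℝ x p hs)

lemma exists_preimage_eq_Icc (hconv : Convex ℝ Ω) (hΩ : IsCompact Ω) {ℓ : ℝ →ᵃ[ℝ] E}
    (hℓ : ℓ.linear 1 ≠ 0) {t : ℝ} (ht : ℓ t ∈ interior Ω) :
    ∃ a b : ℝ, ℓ ⁻¹' Ω = Icc a b ∧ t ∈ Ioo a b := by
  have hcont : Continuous ℓ := ℓ.continuous_of_finiteDimensional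
  have hker : LinearMap.ker ℓ.linear = ⊥ := by
    rw [LinearMap.ker_eq_bot']
    intro s hs
    rw [← mul_one s, ← smul_eq_mul, map_smul] at hs
    exact (smul_eq_zero.1 hs).resolve_right hℓ
  have hclosed : IsClosedEmbedding ℓ := by
    rw [ℓ.decomp]
    exact (Homeomorph.addRight (ℓ 0)).isClosedEmbedding.comp
      (LinearMap.isClosedEmbedding_of_injective hker)
  have hsec := eq_Icc_of_connected_compact
    ((hconv.affine_preimage ℓ).isConnected ⟨t, interior_subset (s := Ω) ht⟩)
    (hclosed.isCompact_preimage hΩ)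
  refine ⟨_, _, hsec, ?_⟩
  rw [← interior_Icc, ← hsec]
  exact preimage_interior_subset_interior_preimage hcont ht

lemma exists_endpoint_abs_fderiv_le_abs (hu : ConcaveOn ℝ Ω u) (hΩ : IsCompact Ω)
    {ℓ : ℝ →ᵃ[ℝ] E} (hℓ : ℓ.linear 1 ≠ 0) {K : ℝ≥0} (hK : LipschitzOnWith K (u ∘ ℓ) (ℓ ⁻¹' Ω))
    {t : ℝ} (ht : ℓ t ∈ interior Ω) (hd : DifferentiableAt ℝ u (ℓ t)) :
    ∃ x a b d : ℝ, ℓ x ∈ frontier Ω ∧ a < b ∧ ℓ ⁻¹' Ω = Icc a b ∧ (x = a ∨ x = b) ∧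
      HasDerivWithinAt (u ∘ ℓ) d (Icc a b) x ∧ |fderiv ℝ u (ℓ t) (ℓ.linear 1)| ≤ |d| := by
  obtain ⟨a, b, hsec, htab⟩ := exists_preimage_eq_Icc hu.1 hΩ hℓ ht
  have hab : a < b := htab.1.trans htab.2
  have hconc : ConcaveOn ℝ (Icc a b) (u ∘ ℓ) := hsec ▸ hu.comp_affineMap ℓ
  obtain ⟨x, d, hx, hder, hle⟩ := exists_endpoint_abs_le_abs_of_concaveOn hconc (hsec ▸ hK) htab
    (hd.hasFDerivAt.comp_hasDerivAt t ℓ.hasDerivAt)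
  refine ⟨x, a, b, d, ?_, hab, hsec, hx, hder, hle⟩
  apply ℓ.continuous_of_finiteDimensional.frontier_preimage_subset Ω
  rwa [hsec, frontier_Icc hab.le]

variable [FiniteDimensional ℝ E] [MeasurableSpace E] [BorelSpace E]
  {μ : Measure E} [μ.IsAddHaarMeasure] {v : E} {K : ℝ≥0}

lemma ae_differentiableAt_of_locallyLipschitzOn {F : Type*} [NormedAddCommGroup F]
    [NormedSpace ℝ F] [FiniteDimensional ℝ F] {f : E → F} {s : Set E} (hs : IsOpen s)
    (hf : LocallyLipschitzOn s f) : ∀ᵐ x ∂μ, x ∈ s → DifferentiableAt ℝ f x := by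
  refine measure_null_of_locally_null _ fun x hx => ?_
  rw [mem_compl_iff, mem_ofPred_eq, Classical.not_imp] at hx
  obtain ⟨C, U, hU, hLip⟩ := hf hx.1
  rw [hs.nhdsWithin_eq hx.1, ← interior_mem_nhds] at hU
  refine ⟨_, inter_mem (mem_nhdsWithin_of_mem_nhds hU) self_mem_nhdsWithin,
    measure_mono_null ?_ (hLip.ae_differentiableWithinAt_of_mem (μ := μ))⟩
  rintro y ⟨hyU, hy⟩ hyd
  exact hy fun _ => (hyd (interior_subset hyU)).differentiableAt (mem_interior_iff_mem_nhds.1 hyU)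

lemma restrict_interior_eq_of_convex (hΩ : Convex ℝ Ω) :
    μ.restrict (interior Ω) = μ.restrict Ω :=
  Measure.restrict_congr_set (interior_ae_eq_of_null_frontier (hΩ.addHaar_frontier μ))

lemma ae_mem_interior_and_differentiableAt_of_concaveOn (hu : ConcaveOn ℝ Ω u) :
    ∀ᵐ z ∂μ.restrict Ω, z ∈ interior Ω ∧ DifferentiableAt ℝ u z := by
  rw [← restrict_interior_eq_of_convex hu.1]
  exact (ae_restrict_mem isOpen_interior.measurableSet).and
    ((ae_restrict_iff' isOpen_interior.measurableSet).2
      (ae_differentiableAt_of_locallyLipschitzOn isOpen_interior hu.locallyLipschitzOn_interior))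

lemma le_add_mul_abs_of_ae_abs_fderiv_le_of_mem_interior (hu : ConcaveOn ℝ Ω u)
    (hK : ∀ᵐ z ∂μ.restrict Ω, |fderiv ℝ u z v| ≤ K) {z : E} {t : ℝ} (hz : z ∈ interior Ω)
    (hzt : z + t • v ∈ interior Ω) : u (z + t • v) ≤ u z + K * |t| := by
  have hcont : ∀ x ∈ interior Ω, ContinuousAt u x := fun x hx =>
    hu.continuousOn_interior.continuousAt (isOpen_interior.mem_nhds hx)
  have hshift : ContinuousAt (fun w => w + t • v) z := by fun_prop
  have hdense : ∃ᶠ w in 𝓝 z, w ∈ interior Ω ∧ DifferentiableAt ℝ u w ∧ |fderiv ℝ u w v| ≤ K := by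
    refine mem_closure_iff_frequently.1
      (subset_closure_of_ae_restrict (μ := μ) isOpen_interior ?_ hz)
    rw [restrict_interior_eq_of_convex hu.1]
    exact (ae_mem_interior_and_differentiableAt_of_concaveOn hu).mono (fun _ h => h.2) |>.and hK
  refine le_of_tendsto_of_tendsto_of_frequently ((hcont _ hzt).tendsto.comp hshift)
    ((hcont z hz).tendsto.add_const _) ?_
  refine (hdense.and_eventually (hshift (isOpen_interior.mem_nhds hzt))).mono ?_
  rintro w ⟨⟨hw, hd, hKw⟩, hwt⟩
  calc u (w + t • v) ≤ u w + fderiv ℝ u w (t • v) :=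
        le_add_fderiv_of_concaveOn hu (interior_subset hw) (interior_subset hwt) hd
    _ ≤ u w + |fderiv ℝ u w v| * |t| := by
        rw [map_smul, smul_eq_mul, mul_comm, ← abs_mul]
        gcongr
        exact le_abs_self _
    _ ≤ u w + K * |t| := by gcongr

lemma le_add_mul_abs_of_ae_abs_fderiv_le (hu : ConcaveOn ℝ Ω u) (huc : ContinuousOn u Ω)
    (hint : (interior Ω).Nonempty) (hK : ∀ᵐ z ∂μ.restrict Ω, |fderiv ℝ u z v| ≤ K) {z : E} {t : ℝ}
    (hz : z ∈ Ω) (hzt : z + t • v ∈ Ω) : u (z + t • v) ≤ u z + K * |t| := by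
  obtain ⟨p, hp⟩ := hint
  have hline : ∀ x ∈ Ω, Tendsto (fun s : ℝ => AffineMap.lineMap x p s) (𝓝[>] 0)
      (𝓝[interior Ω] x) := fun x hx => tendsto_lineMap_nhdsWithin_interior hu.1 hx hp
  have hlim : ∀ x ∈ Ω, Tendsto (fun s : ℝ => u (AffineMap.lineMap x p s)) (𝓝[>] 0) (𝓝 (u x)) :=
    fun x hx => ((huc x hx).mono interior_subset).tendsto.comp (hline x hx)
  have hscale : Tendsto (fun s : ℝ => K * |(1 - s) * t|) (𝓝[>] 0) (𝓝 (K * |t|)) := by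
    have hcont : Continuous fun s : ℝ => K * |(1 - s) * t| := by fun_prop
    simpa using (hcont.tendsto 0).mono_left nhdsWithin_le_nhds
  refine le_of_tendsto_of_tendsto (hlim _ hzt) ((hlim z hz).add hscale) ?_
  filter_upwards [(hline z hz).eventually self_mem_nhdsWithin,
    (hline _ hzt).eventually self_mem_nhdsWithin] with s hs hst
  have hcontract : AffineMap.lineMap (z + t • v) p s =
      AffineMap.lineMap z p s + ((1 - s) * t) • v := by
    simp only [AffineMap.lineMap_apply_module]
    module
  rw [hcontract] at hst ⊢
  exact le_add_mul_abs_of_ae_abs_fderiv_le_of_mem_interior hu hK hs hst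

lemma lipschitzOnWith_comp_affineMap_of_ae_abs_fderiv_le (hu : ConcaveOn ℝ Ω u)
    (huc : ContinuousOn u Ω) (hint : (interior Ω).Nonempty) (ℓ : ℝ →ᵃ[ℝ] E)
    (hK : ∀ᵐ z ∂μ.restrict Ω, |fderiv ℝ u z (ℓ.linear 1)| ≤ K) :
    LipschitzOnWith K (u ∘ ℓ) (ℓ ⁻¹' Ω) := by
  refine LipschitzOnWith.of_le_add_mul K fun s hs t ht => ?_
  have hst : ℓ s = ℓ t + (s - t) • ℓ.linear 1 := by
    rw [← map_smul, smul_eq_mul, mul_one, add_comm, ← vadd_eq_add, ← ℓ.map_vadd, vadd_eq_add,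
      sub_add_cancel]
  rw [mem_preimage, hst] at hs
  simpa only [Function.comp_apply, hst, Real.dist_eq] using
    le_add_mul_abs_of_ae_abs_fderiv_le hu huc hint hK ht hs

/-- An arbitrary family of lines, rather than all `t ↦ p + t • v`, lets the coordinate lines of a
product keep their natural parametrisation. -/
theorem stmt_17_general {ι : Type*} (hΩ : IsCompact Ω) (hint : (interior Ω).Nonempty)
    (hu : ConcaveOn ℝ Ω u) (huc : ContinuousOn u Ω) (hv : v ≠ 0)
    (hfin : essSup (fun z => ENNReal.ofReal |fderiv ℝ u z v|) (μ.restrict Ω) ≠ ⊤)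
    (ℓ : ι → ℝ →ᵃ[ℝ] E) (hℓ : ∀ i, (ℓ i).linear 1 = v)
    (hcover : ∀ z ∈ interior Ω, ∃ i t, ℓ i t = z) :
    essSup (fun z => ENNReal.ofReal |fderiv ℝ u z v|) (μ.restrict Ω) =
      sSup {w : ℝ≥0∞ | ∃ (i : ι) (x a b d : ℝ), ℓ i x ∈ frontier Ω ∧ a < b ∧
        {s : ℝ | ℓ i s ∈ Ω} = Icc a b ∧ (x = a ∨ x = b) ∧
        HasDerivWithinAt (fun s => u (ℓ i s)) d (Icc a b) x ∧ w = ENNReal.ofReal |d|} := by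
  set M := essSup (fun z => ENNReal.ofReal |fderiv ℝ u z v|) (μ.restrict Ω)
  have hae : ∀ᵐ z ∂μ.restrict Ω, |fderiv ℝ u z v| ≤ M.toNNReal :=
    (ENNReal.ae_le_essSup _).mono fun z hz => (ENNReal.ofReal_le_iff_le_toReal hfin).1 hz
  have hLip : ∀ i, LipschitzOnWith M.toNNReal (u ∘ ℓ i) (ℓ i ⁻¹' Ω) := fun i =>
    lipschitzOnWith_comp_affineMap_of_ae_abs_fderiv_le hu huc hint (ℓ i) ((hℓ i).symm ▸ hae)
  apply le_antisymm
  · refine essSup_le_of_ae_le _ ?_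
    filter_upwards [ae_mem_interior_and_differentiableAt_of_concaveOn hu] with z ⟨hz, hd⟩
    obtain ⟨i, t, rfl⟩ := hcover z hz
    obtain ⟨x, a, b, d, hx, hab, hsec, hend, hder, hle⟩ :=
      exists_endpoint_abs_fderiv_le_abs hu hΩ ((hℓ i).trans_ne hv) (hLip i) hz hd
    rw [hℓ] at hle
    exact (ENNReal.ofReal_le_ofReal hle).trans
      (le_sSup ⟨i, x, a, b, d, hx, hab, hsec, hend, hder, rfl⟩)
  · refine sSup_le ?_
    rintro _ ⟨i, x, a, b, d, -, hab, hsec, hend, hder, rfl⟩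
    have hx : x ∈ Icc a b := by
      rcases hend with rfl | rfl
      exacts [left_mem_Icc.2 hab.le, right_mem_Icc.2 hab.le]
    refine (ENNReal.ofReal_le_iff_le_toReal hfin).2 ?_
    exact norm_le_of_hasDerivWithinAt_of_lipschitzOnWith (uniqueDiffOn_Icc hab x hx) hx hder
      (hsec ▸ hLip i)

end ConcaveOnConvexSet

lemma MemU.LinfN_fderiv_ne_top {Ω : Set (ℝ × ℝ)} {u : ℝ × ℝ → ℝ} (hu : MemU Ω u) (v : ℝ × ℝ) :
    LinfN Ω (fun z => fderiv ℝ u z v) ≠ ⊤ := by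
  obtain ⟨-, hconc, -, C, hC⟩ := hu
  refine ne_top_of_le_ne_top (ENNReal.ofReal_ne_top (r := C * ‖v‖)) (essSup_le_of_ae_le _ ?_)
  filter_upwards [ae_mem_interior_and_differentiableAt_of_concaveOn hconc] with z ⟨hz, hd⟩
  exact ENNReal.ofReal_le_ofReal ((fderiv ℝ u z).le_of_opNorm_le (hC z hz _ hd.hasFDerivAt) v)

/-- The horizontal line at height `y`, parametrised by the first coordinate. -/
noncomputable def horizontalLine (y : ℝ) : ℝ →ᵃ[ℝ] ℝ × ℝ :=
  (AffineMap.id ℝ ℝ).prod (AffineMap.const ℝ ℝ y)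

/-- The vertical line at abscissa `x`, parametrised by the second coordinate. -/
noncomputable def verticalLine (x : ℝ) : ℝ →ᵃ[ℝ] ℝ × ℝ :=
  (AffineMap.const ℝ ℝ x).prod (AffineMap.id ℝ ℝ)

/-- Lemma 4: the essential supremum of `|u_x|` over `Ω` equals the supremum
of the moduli of the one-sided derivatives of `x ↦ u(x, y₀)` at endpoints of
nondegenerate horizontal sections of `Ω`, taken over all such boundary points; and
analogously for `u_y` with vertical sections. -/
theorem stmt_17 (a b : ℝ) (hab : a < b) (φ₁ φ₂ : ℝ → ℝ)
    (hφ₁ : ConvexOn ℝ (Icc a b) φ₁) (hφ₂ : ConcaveOn ℝ (Icc a b) φ₂)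
    (hφle : ∀ x ∈ Icc a b, φ₁ x ≤ φ₂ x)
    (Ω : Set (ℝ × ℝ))
    (hΩ : Ω = {z : ℝ × ℝ | z.1 ∈ Icc a b ∧ z.2 ∈ Icc (φ₁ z.1) (φ₂ z.1)})
    (hΩc : IsCompact Ω) (hΩint : (interior Ω).Nonempty)
    (u : ℝ × ℝ → ℝ) (hu : MemU Ω u) :
    LinfN Ω (ux u) = sSup {v : ℝ≥0∞ | ∃ x₀ y₀ a' b' d : ℝ,
        (x₀, y₀) ∈ frontier Ω ∧ a' < b' ∧ {x : ℝ | (x, y₀) ∈ Ω} = Icc a' b' ∧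
        (x₀ = a' ∨ x₀ = b') ∧
        HasDerivWithinAt (fun x => u (x, y₀)) d (Icc a' b') x₀ ∧
        v = ENNReal.ofReal |d|} ∧
    LinfN Ω (uy u) = sSup {v : ℝ≥0∞ | ∃ x₀ y₀ c' d' d : ℝ,
        (x₀, y₀) ∈ frontier Ω ∧ c' < d' ∧ {y : ℝ | (x₀, y) ∈ Ω} = Icc c' d' ∧
        (y₀ = c' ∨ y₀ = d') ∧
        HasDerivWithinAt (fun y => u (x₀, y)) d (Icc c' d') y₀ ∧
        v = ENNReal.ofReal |d|} := by
  exact ⟨(stmt_17_general hΩc hΩint hu.2.1 hu.1 (by simp) (hu.LinfN_fderiv_ne_top (1, 0))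
      horizontalLine (fun _ => rfl) fun z _ => ⟨z.2, z.1, rfl⟩).trans
      (congrArg sSup (Set.ext fun _ => exists_comm)),
    stmt_17_general hΩc hΩint hu.2.1 hu.1 (by simp) (hu.LinfN_fderiv_ne_top (0, 1))
      verticalLine (fun _ => rfl) fun z _ => ⟨z.1, z.2, rfl⟩⟩
end

section
/- Write Ω = {(x, y) : x ∈ [a, b], φ₁(x) ≤ y ≤ φ₂(x)} with φ₁ convex and φ₂ concave on [a, b]. Suppose at least one of the two vertical lines of support of Ω is not angular, i.e. φ₂(a) > φ₁(a), or φ₂(b) > φ₁(b), or at least one of the one-sided derivatives φ₂'(a+), −φ₁'(a+), −φ₂'(b−), φ₁'(b−) equals +∞. Then K_∞(Ω) = sup{ ‖u_x‖_∞ / ‖u_y‖_∞ : u ∈ 𝒰_Ω, u ≢ 0 } = +∞, i.e. for every C > 0 there exists a nonzero u ∈ 𝒰_Ω with ‖u_x‖_∞ > C ‖u_y‖_∞. -/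
open Set MeasureTheory
open scoped ENNReal

/-!
Stretch the plane by a large factor `N` in the `x`-direction and let `u` be the distance to the
complement of the stretched domain. It is concave and vanishes on `∂Ω`. It is `1`-Lipschitz along
vertical lines, so `‖u_y‖_∞ ≤ 1`. If a vertical segment `{x} × [y - D, y + D]` lies inside `Ω`, then
`u (x, y) ≥ D` once `N` is large, whereas `u` vanishes where the horizontal line through `(x, y)`
leaves `Ω`; so `‖u_x‖_∞` is at least `D` divided by the horizontal distance from `(x, y)` to `∂Ω`.
A vertical line of support is not angular exactly when vertical sections of `Ω` close to it can be
arbitrarily long compared with their distance to it, which makes this quotient arbitrarily large.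
-/

section ComplDist

theorem add_infDist_compl_smul_mem {E : Type*} [SeminormedAddCommGroup E] [NormedSpace ℝ E]
    {K : Set E} {z d : E} (hz : z ∈ K) (hd : ‖d‖ < 1) : z + Metric.infDist z Kᶜ • d ∈ K := by
  rcases (Metric.infDist_nonneg (x := z) (s := Kᶜ)).eq_or_lt with hzero | hpos
  · simpa only [← hzero, zero_smul, add_zero] using hz
  · apply Metric.ball_infDist_compl_subset
    rw [mem_ball_iff_norm, add_sub_cancel_left, norm_smul, Real.norm_of_nonneg hpos.le]
    exact mul_lt_of_lt_one_right hpos hd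

theorem concaveOn_infDist_compl {E : Type*} [SeminormedAddCommGroup E] [NormedSpace ℝ E]
    {K : Set E} (hK : Convex ℝ K) : ConcaveOn ℝ K fun z => Metric.infDist z Kᶜ := by
  rcases Kᶜ.eq_empty_or_nonempty with hempty | hne
  · simpa only [hempty, Metric.infDist_empty] using concaveOn_const (0 : ℝ) hK
  refine ⟨hK, fun p hp q hq s t hs ht hst => (Metric.le_infDist hne).2 fun w hw => ?_⟩
  by_contra! hlt
  set R := s • Metric.infDist p Kᶜ + t • Metric.infDist q Kᶜ with hR
  have hRpos : 0 < R := dist_nonneg.trans_lt hlt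
  set d := R⁻¹ • (w - (s • p + t • q)) with hd
  have hd_lt : ‖d‖ < 1 := by
    rw [hd, norm_smul, norm_inv, Real.norm_of_nonneg hRpos.le, ← dist_eq_norm, dist_comm]
    exact (inv_mul_lt_one₀ hRpos).2 hlt
  have hw_eq : s • (p + Metric.infDist p Kᶜ • d) + t • (q + Metric.infDist q Kᶜ • d) = w :=
    calc _ = s • p + t • q + R • d := by rw [hR]; module
      _ = w := by rw [hd, smul_inv_smul₀ hRpos.ne', add_sub_cancel]
  exact hw (hw_eq ▸ hK (add_infDist_compl_smul_mem hp hd_lt) (add_infDist_compl_smul_mem hq hd_lt)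
    hs ht hst)

variable {E F : Type*} [NormedAddCommGroup E] [NormedSpace ℝ E] [NormedAddCommGroup F]
  [NormedSpace ℝ F] (S : E ≃L[ℝ] F) {K : Set E}

/-- The distance to the complement of `K` in the norm `‖S ·‖` pulled back along the linear
isomorphism `S`. -/
noncomputable def complDist (K : Set E) (z : E) : ℝ := Metric.infDist (S z) (S '' K)ᶜ

theorem complDist_eq_comp (K : Set E) :
    complDist S K = (fun y => Metric.infDist y (S '' K)ᶜ) ∘ S := rfl

theorem lipschitzWith_complDist (K : Set E) :
    LipschitzWith ‖(S : E →L[ℝ] F)‖₊ (complDist S K) := by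
  rw [← one_mul ‖(S : E →L[ℝ] F)‖₊]
  exact (Metric.lipschitz_infDist_pt (S '' K)ᶜ).comp (S : E →L[ℝ] F).lipschitz

theorem concaveOn_complDist (hK : Convex ℝ K) : ConcaveOn ℝ K (complDist S K) := by
  have himage := concaveOn_infDist_compl (hK.linear_image (S : E →ₗ[ℝ] F))
  exact (himage.comp_linearMap (S : E →ₗ[ℝ] F)).subset (subset_preimage_image S K) hK

theorem complDist_eq_zero {z : E} (hz : z ∉ interior K) : complDist S K z = 0 := by
  apply Metric.infDist_zero_of_mem_closure
  have himage : interior (S '' K) = S '' interior K := (S.toHomeomorph.image_interior K).symm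
  rwa [closure_compl, himage, mem_compl_iff, S.injective.mem_set_image]

theorem norm_fderiv_complDist_apply_le (K : Set E) (z v : E) :
    ‖fderiv ℝ (complDist S K) z v‖ ≤ ‖S v‖ := by
  rw [complDist_eq_comp, S.comp_right_fderiv, ContinuousLinearMap.comp_apply]
  have hnorm := norm_fderiv_le_of_lipschitz ℝ (x₀ := S z) (Metric.lipschitz_infDist_pt (S '' K)ᶜ)
  exact (ContinuousLinearMap.le_of_opNorm_le _ hnorm (S v)).trans_eq (one_mul _)

theorem memU_complDist (S : (ℝ × ℝ) ≃L[ℝ] F) {K : Set (ℝ × ℝ)} (hK : Convex ℝ K) :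
    MemU K (complDist S K) :=
  ⟨(lipschitzWith_complDist S K).continuous.continuousOn, concaveOn_complDist S hK,
    fun _ hz => complDist_eq_zero S hz.2,
    ⟨_, fun _ _ _ hg => hg.le_of_lipschitz (lipschitzWith_complDist S K)⟩⟩

end ComplDist

section StretchFst

variable (E F : Type*) [NormedAddCommGroup E] [NormedSpace ℝ E] [NormedAddCommGroup F]
  [NormedSpace ℝ F]

/-- The linear automorphism of `E × F` stretching the first factor by `N`. -/
noncomputable def stretchFst (N : ℝˣ) : (E × F) ≃L[ℝ] E × F :=
  (ContinuousLinearEquiv.smulLeft N).prodCongr (.refl ℝ F)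

variable {E F}

@[simp]
theorem stretchFst_apply (N : ℝˣ) (z : E × F) : stretchFst E F N z = ((N : ℝ) • z.1, z.2) := rfl

theorem exists_le_complDist_stretchFst [ProperSpace F] {K : Set (E × F)} (hne : Kᶜ.Nonempty)
    {x : E} {y : F} {D : ℝ} (hD : 0 < D) (hseg : {x} ×ˢ Metric.closedBall y D ⊆ interior K) :
    ∃ N : ℝˣ, D ≤ complDist (stretchFst E F N) K (x, y) := by
  obtain ⟨U, V, hU, -, hxU, hyV, hUV⟩ := generalized_tube_lemma isCompact_singleton
    (isCompact_closedBall y D) isOpen_interior hseg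
  obtain ⟨δ, hδ, hball⟩ := Metric.isOpen_iff.1 hU x (hxU rfl)
  have hN : 0 < D / δ := div_pos hD hδ
  refine ⟨Units.mk0 (D / δ) hN.ne', (Metric.le_infDist ?_).2 ?_⟩
  · rw [← image_compl_eq (stretchFst E F _).bijective]
    exact hne.image _
  rw [← image_compl_eq (stretchFst E F _).bijective]
  rintro _ ⟨p, hp, rfl⟩
  by_contra! hlt
  simp only [stretchFst_apply, Units.val_mk0, Prod.dist_eq, dist_smul₀, max_lt_iff,
    Real.norm_of_nonneg hN.le] at hlt
  obtain ⟨hfst, hsnd⟩ := hlt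
  rw [div_mul_eq_mul_div, div_lt_iff₀ hδ] at hfst
  have hpx : p.1 ∈ Metric.ball x δ := Metric.mem_ball'.2 (lt_of_mul_lt_mul_left hfst hD.le)
  exact hp (interior_subset (hUV ⟨hball hpx, hyV (Metric.mem_closedBall'.2 hsnd.le)⟩))

theorem abs_uy_complDist_stretchFst_le (N : ℝˣ) (K : Set (ℝ × ℝ)) (z : ℝ × ℝ) :
    |uy (complDist (stretchFst ℝ ℝ N) K) z| ≤ 1 := by
  simpa [uy, Prod.norm_def] using
    norm_fderiv_complDist_apply_le (stretchFst ℝ ℝ N) K z ((0 : ℝ), (1 : ℝ))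

end StretchFst

section TangentPlane

theorem le_add_of_concaveOn_of_hasFDerivAt {E : Type*} [NormedAddCommGroup E] [NormedSpace ℝ E]
    {K : Set E} {u : E → ℝ} (hu : ConcaveOn ℝ K u) {p m : E} (hp : p ∈ K) (hm : m ∈ K)
    {g : E →L[ℝ] ℝ} (hg : HasFDerivAt u g p) : u m ≤ u p + g (m - p) := by
  have hline := hu.comp_affineMap (AffineMap.lineMap p m : ℝ →ᵃ[ℝ] E)
  have hderiv : HasDerivAt (u ∘ (AffineMap.lineMap p m : ℝ →ᵃ[ℝ] E)) (g (m - p)) 0 :=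
    HasFDerivAt.comp_hasDerivAt (0 : ℝ) (by simpa using hg) AffineMap.hasDerivAt_lineMap
  have hslope := hline.slope_le_of_hasDerivAt (x := 0) (y := 1) (by simpa using hp)
    (by simpa using hm) one_pos hderiv
  simp only [slope_def_field, Function.comp_apply, AffineMap.lineMap_apply_zero,
    AffineMap.lineMap_apply_one, sub_zero, div_one] at hslope
  linarith

theorem sub_le_of_concaveOn_of_ae_fderiv_le {E : Type*} [NormedAddCommGroup E] [NormedSpace ℝ E]
    [MeasurableSpace E] [OpensMeasurableSpace E] {μ : Measure E} [μ.IsOpenPosMeasure]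
    {K : Set E} {u N : E → ℝ} (hu : ConcaveOn ℝ K u) (hcont : Continuous u) (hN : Continuous N)
    {m w : E} (hm : m ∈ K) (hw : w ∈ closure (interior K))
    (hderiv : ∀ᵐ p ∂μ.restrict K, DifferentiableAt ℝ u p ∧ fderiv ℝ u p (m - p) ≤ N (m - p)) :
    u m - u w ≤ N (m - w) := by
  have hdense : Dense {p | p ∈ interior K →
      DifferentiableAt ℝ u p ∧ fderiv ℝ u p (m - p) ≤ N (m - p)} :=
    μ.dense_of_ae <| (ae_restrict_iff' isOpen_interior.measurableSet).1 <|
      ae_restrict_of_ae_restrict_of_subset interior_subset hderiv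
  have hclosed : IsClosed {p | u m - u p ≤ N (m - p)} :=
    isClosed_le (by fun_prop) (by fun_prop)
  refine closure_minimal ?_ hclosed
    (closure_minimal (hdense.open_subset_closure_inter isOpen_interior) isClosed_closure hw)
  rintro p ⟨hpK, hp⟩
  obtain ⟨hdiff, hle⟩ := hp hpK
  exact sub_le_iff_le_add'.2 <|
    (le_add_of_concaveOn_of_hasFDerivAt hu (interior_subset hpK) hm hdiff.hasFDerivAt).trans
      (add_le_add_right hle _)

theorem fderiv_apply_le_of_abs_le {u : ℝ × ℝ → ℝ} {p : ℝ × ℝ} {A B : ℝ} (hx : |ux u p| ≤ A)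
    (hy : |uy u p| ≤ B) (v : ℝ × ℝ) : fderiv ℝ u p v ≤ A * |v.1| + B * |v.2| := by
  have hv : v = v.1 • ((1 : ℝ), (0 : ℝ)) + v.2 • ((0 : ℝ), (1 : ℝ)) := by ext <;> simp
  calc fderiv ℝ u p v = ux u p * v.1 + uy u p * v.2 := by
        conv_lhs => rw [hv, map_add, map_smul, map_smul, smul_eq_mul, smul_eq_mul]
        rw [ux, uy, mul_comm, mul_comm v.2]
    _ ≤ |ux u p| * |v.1| + |uy u p| * |v.2| := by
        rw [← abs_mul, ← abs_mul]
        exact add_le_add (le_abs_self _) (le_abs_self _)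
    _ ≤ A * |v.1| + B * |v.2| := by gcongr

theorem ae_abs_le_of_linfN_le {K : Set (ℝ × ℝ)} {f : ℝ × ℝ → ℝ} {A : ℝ} (hA : 0 ≤ A)
    (hf : LinfN K f ≤ ENNReal.ofReal A) : ∀ᵐ p ∂volume.restrict K, |f p| ≤ A := by
  filter_upwards [ENNReal.ae_le_essSup fun z => ENNReal.ofReal |f z|] with p hp
  exact (ENNReal.ofReal_le_ofReal_iff hA).1 (hp.trans hf)

theorem linfN_le_of_abs_le {K : Set (ℝ × ℝ)} {f : ℝ × ℝ → ℝ} {B : ℝ} (hf : ∀ z, |f z| ≤ B) :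
    LinfN K f ≤ ENNReal.ofReal B :=
  essSup_le_of_ae_le _ (.of_forall fun z => ENNReal.ofReal_le_ofReal (hf z))

theorem sub_le_of_linfN_ux_le {K : Set (ℝ × ℝ)} {u : ℝ × ℝ → ℝ} {L : NNReal} {A B : ℝ}
    (hlip : LipschitzWith L u) (hu : ConcaveOn ℝ K u) (hA : 0 ≤ A) (hB : 0 ≤ B)
    (hux : LinfN K (ux u) ≤ ENNReal.ofReal A) (huy : LinfN K (uy u) ≤ ENNReal.ofReal B)
    {m w : ℝ × ℝ} (hm : m ∈ K) (hw : w ∈ closure (interior K)) :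
    u m - u w ≤ A * |m.1 - w.1| + B * |m.2 - w.2| := by
  refine sub_le_of_concaveOn_of_ae_fderiv_le (μ := volume) hu hlip.continuous
    (N := fun v => A * |v.1| + B * |v.2|) (by fun_prop) hm hw ?_
  filter_upwards [ae_restrict_of_ae hlip.ae_differentiableAt, ae_abs_le_of_linfN_le hA hux,
    ae_abs_le_of_linfN_le hB huy] with p hdiff hx hy
  exact ⟨hdiff, fderiv_apply_le_of_abs_le hx hy _⟩

end TangentPlane

section SectionCriterion

theorem exists_mem_frontier_of_isPreconnected {X : Type*} [TopologicalSpace X] {s t : Set X}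
    (hs : IsPreconnected s) {p q : X} (hp : p ∈ s) (hpt : p ∈ t) (hq : q ∈ s) (hqt : q ∉ t) :
    ∃ w ∈ s, w ∈ frontier t := by
  by_contra! hfr
  have hcover : s ⊆ interior t ∪ (closure t)ᶜ := fun z hz =>
    or_iff_not_imp_right.2 fun hzt => by_contra fun hzi => hfr z hz ⟨not_not.1 hzt, hzi⟩
  have hdisj : Disjoint (interior t) (closure t)ᶜ :=
    disjoint_compl_right_iff_subset.2 interior_subset_closure
  have hpi : p ∈ interior t := by_contra fun hpi => hfr p hp ⟨subset_closure hpt, hpi⟩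
  exact hqt <| interior_subset <| hs.subset_left_of_subset_union isOpen_interior
    isClosed_closure.isOpen_compl hdisj hcover ⟨p, hp, hpi⟩ hq

theorem exists_horizontal_mem_frontier {U : Set (ℝ × ℝ)} {x w y : ℝ} (hx : (x, y) ∈ U)
    (hw : (w, y) ∉ U) : ∃ v, |x - v| ≤ |x - w| ∧ (v, y) ∈ frontier U := by
  obtain ⟨p, hp, hpU⟩ := exists_mem_frontier_of_isPreconnected (X := ℝ × ℝ)
    (convex_segment (𝕜 := ℝ) (x, y) (w, y)).isPreconnected
    (left_mem_segment ℝ _ _) hx (right_mem_segment ℝ _ _) hw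
  rw [← Prod.image_mk_segment_left] at hp
  obtain ⟨v, hv, rfl⟩ := hp
  rw [segment_eq_uIcc] at hv
  exact ⟨v, by simpa only [abs_sub_comm] using abs_sub_left_of_mem_uIcc hv, hpU⟩

theorem exists_memU_mul_linfN_uy_lt_linfN_ux {K : Set (ℝ × ℝ)} (hK : Convex ℝ K)
    {x y w C D : ℝ} (hC : 0 ≤ C) (hseg : {x} ×ˢ Metric.closedBall y D ⊆ interior K)
    (hw : (w, y) ∉ interior K) (hlt : C * |x - w| < D) :
    ∃ u, MemU K u ∧ (∃ z ∈ K, u z ≠ 0) ∧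
      ENNReal.ofReal C * LinfN K (uy u) < LinfN K (ux u) := by
  have hD : 0 < D := (mul_nonneg hC (abs_nonneg _)).trans_lt hlt
  have hm : (x, y) ∈ interior K := hseg ⟨rfl, Metric.mem_closedBall_self hD.le⟩
  have hne : Kᶜ.Nonempty :=
    nonempty_compl.2 fun hK_univ => hw (by rw [hK_univ, interior_univ]; trivial)
  obtain ⟨v, hxv, hv⟩ := exists_horizontal_mem_frontier hm hw
  rw [isOpen_interior.frontier_eq] at hv
  obtain ⟨N, hN⟩ := exists_le_complDist_stretchFst hne hD hseg
  set u := complDist (stretchFst ℝ ℝ N) K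
  have hv_zero : u (v, y) = 0 := complDist_eq_zero _ hv.2
  have huy : LinfN K (uy u) ≤ ENNReal.ofReal 1 :=
    linfN_le_of_abs_le (abs_uy_complDist_stretchFst_le N K)
  refine ⟨u, memU_complDist _ hK, ⟨_, interior_subset hm, (hD.trans_le hN).ne'⟩, ?_⟩
  by_contra! hle
  have hux : LinfN K (ux u) ≤ ENNReal.ofReal C :=
    hle.trans (mul_le_of_le_one_right' (huy.trans_eq ENNReal.ofReal_one))
  have hdrop := sub_le_of_linfN_ux_le (lipschitzWith_complDist _ K) (concaveOn_complDist _ hK) hC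
    zero_le_one hux huy (interior_subset hm) hv.1
  have hshort : C * |x - v| ≤ C * |x - w| := mul_le_mul_of_nonneg_left hxv hC
  simp only [sub_self, abs_zero, mul_zero, add_zero] at hdrop
  linarith

end SectionCriterion

section UnboundedRatio

variable {E : Type*} [NormedAddCommGroup E] [NormedSpace ℝ E] {e o : E} {f h φ₁ φ₂ : E → ℝ}

/-- The quotient `f x / dist x e` is unbounded above on the open segment from `e` to `o`. With `f`
the length of the vertical sections of `Ω` and `e`, `o` the endpoints of its projection to the
`x`-axis, this says that the vertical line of support at `e` is not angular. -/
def HasUnboundedRatio (f : E → ℝ) (e o : E) : Prop :=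
  ∀ C : ℝ, ∃ x ∈ openSegment ℝ e o, C * dist x e < f x

theorem hasUnboundedRatio_of_segment
    (hf : ∀ C : ℝ, ∃ x ∈ segment ℝ e o, x ≠ e ∧ C * dist x e < f x) :
    HasUnboundedRatio f e o := fun C => by
  obtain ⟨x, hx, hxe, hlt⟩ := hf (max C (f o / dist o e))
  have hxo : x ≠ o := by
    rintro rfl
    exact hlt.not_ge ((div_le_iff₀ (dist_pos.2 hxe)).1 (le_max_right _ _))
  exact ⟨x, mem_openSegment_of_ne_left_right hxe.symm hxo.symm hx,
    (mul_le_mul_of_nonneg_right (le_max_left _ _) dist_nonneg).trans_lt hlt⟩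

theorem sub_mul_le_lineMap_of_concaveOn (hh : ConcaveOn ℝ (segment ℝ e o) h) {t : ℝ}
    (ht : t ∈ Icc (0 : ℝ) 1) : h e - t * (h e - h o) ≤ h (AffineMap.lineMap e o t) := by
  have hconc := hh.2 (left_mem_segment ℝ e o) (right_mem_segment ℝ e o) (sub_nonneg.2 ht.2) ht.1
    (sub_add_cancel 1 t)
  rw [AffineMap.lineMap_apply_module]
  refine le_trans (le_of_eq ?_) hconc
  simp only [smul_eq_mul]
  ring

theorem hasUnboundedRatio_of_concaveOn_of_pos (hh : ConcaveOn ℝ (segment ℝ e o) h)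
    (hpos : 0 < h e) : HasUnboundedRatio h e o := fun C => by
  have hcont : Continuous fun t : ℝ => h e - t * (h e - h o) - C * (t * dist e o) := by fun_prop
  have hnear : ∀ᶠ t in nhdsWithin (0 : ℝ) (Ioi 0),
      0 < h e - t * (h e - h o) - C * (t * dist e o) :=
    nhdsWithin_le_nhds (hcont.continuousAt.eventually_const_lt (by simpa using hpos))
  obtain ⟨t, ht, ht01⟩ := (hnear.and (Ioo_mem_nhdsGT one_pos)).exists
  refine ⟨AffineMap.lineMap e o t, lineMap_mem_openSegment ℝ e o ht01, ?_⟩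
  rw [dist_lineMap_left, Real.norm_of_nonneg ht01.1.le]
  exact (sub_pos.1 ht).trans_le (sub_mul_le_lineMap_of_concaveOn hh (Ioo_subset_Icc_self ht01))

theorem exists_sub_mul_dist_le_of_concaveOn (hh : ConcaveOn ℝ (segment ℝ e o) h) :
    ∃ M : ℝ, ∀ x ∈ segment ℝ e o, h e - M * dist x e ≤ h x := by
  refine ⟨(h e - h o) / dist e o, fun x hx => ?_⟩
  rw [segment_eq_image_lineMap] at hx
  obtain ⟨t, ht, rfl⟩ := hx
  have hchord : (h e - h o) / dist e o * dist e o = h e - h o :=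
    div_mul_cancel_of_imp fun heo => by rw [dist_eq_zero.1 heo, sub_self]
  calc _ = h e - t * (h e - h o) := by
        rw [dist_lineMap_left, Real.norm_of_nonneg ht.1, mul_left_comm, hchord]
    _ ≤ h (AffineMap.lineMap e o t) := sub_mul_le_lineMap_of_concaveOn hh ht

theorem HasUnboundedRatio.add_concaveOn (hf : HasUnboundedRatio f e o)
    (hh : ConcaveOn ℝ (segment ℝ e o) h) (he : 0 ≤ h e) : HasUnboundedRatio (f + h) e o :=
  fun C => by
    obtain ⟨M, hM⟩ := exists_sub_mul_dist_le_of_concaveOn hh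
    obtain ⟨x, hx, hlt⟩ := hf (C + M)
    refine ⟨x, hx, ?_⟩
    have hMx := hM x (openSegment_subset_segment ℝ e o hx)
    rw [Pi.add_apply]
    linarith

theorem hasUnboundedRatio_sub_of_upper (hφ₁ : ConvexOn ℝ (segment ℝ e o) φ₁) (he : φ₁ e ≤ φ₂ e)
    (hslope : HasUnboundedRatio (fun x => φ₂ x - φ₂ e) e o) :
    HasUnboundedRatio (φ₂ - φ₁) e o := by
  have hadd := hslope.add_concaveOn ((concaveOn_const (φ₂ e) hφ₁.1).sub hφ₁) (sub_nonneg.2 he)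
  convert hadd using 1
  ext x
  simp

theorem hasUnboundedRatio_sub_of_lower (hφ₂ : ConcaveOn ℝ (segment ℝ e o) φ₂) (he : φ₁ e ≤ φ₂ e)
    (hslope : HasUnboundedRatio (fun x => φ₁ e - φ₁ x) e o) :
    HasUnboundedRatio (φ₂ - φ₁) e o := by
  have hadd := hslope.add_concaveOn (hφ₂.sub (convexOn_const (φ₁ e) hφ₂.1)) (sub_nonneg.2 he)
  convert hadd using 1
  ext x
  simp

end UnboundedRatio

section NotAngular

variable {a b : ℝ} {φ₁ φ₂ g : ℝ → ℝ}

theorem hasUnboundedRatio_of_Ioc (hg : ∀ C : ℝ, ∃ x ∈ Ioc a b, C * (x - a) < g x) :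
    HasUnboundedRatio g a b := hasUnboundedRatio_of_segment fun C => by
  obtain ⟨x, hx, hlt⟩ := hg C
  refine ⟨x, Icc_subset_segment (Ioc_subset_Icc_self hx), hx.1.ne', ?_⟩
  rwa [Real.dist_eq, abs_of_pos (sub_pos.2 hx.1)]

theorem hasUnboundedRatio_of_Ico (hg : ∀ C : ℝ, ∃ x ∈ Ico a b, C * (b - x) < g x) :
    HasUnboundedRatio g b a := hasUnboundedRatio_of_segment fun C => by
  obtain ⟨x, hx, hlt⟩ := hg C
  refine ⟨x, segment_symm ℝ a b ▸ Icc_subset_segment (Ico_subset_Icc_self hx), hx.2.ne, ?_⟩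
  rwa [dist_comm, Real.dist_eq, abs_of_pos (sub_pos.2 hx.2)]

theorem hasUnboundedRatio_sub_left (hab : a ≤ b) (hφ₁ : ConvexOn ℝ (Icc a b) φ₁)
    (hφ₂ : ConcaveOn ℝ (Icc a b) φ₂) (ha : φ₁ a ≤ φ₂ a)
    (hnotang : φ₁ a < φ₂ a ∨
      (∀ C : ℝ, ∃ x ∈ Ioc a b, C < (φ₂ x - φ₂ a) / (x - a)) ∨
      (∀ C : ℝ, ∃ x ∈ Ioc a b, (φ₁ x - φ₁ a) / (x - a) < C)) :
    HasUnboundedRatio (φ₂ - φ₁) a b := by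
  rw [← segment_eq_Icc hab] at hφ₁ hφ₂
  rcases hnotang with hgap | hupper | hlower
  · exact hasUnboundedRatio_of_concaveOn_of_pos (hφ₂.sub hφ₁) (sub_pos.2 hgap)
  · refine hasUnboundedRatio_sub_of_upper hφ₁ ha (hasUnboundedRatio_of_Ioc fun C => ?_)
    obtain ⟨x, hx, hlt⟩ := hupper C
    exact ⟨x, hx, (lt_div_iff₀ (sub_pos.2 hx.1)).1 hlt⟩
  · refine hasUnboundedRatio_sub_of_lower hφ₂ ha (hasUnboundedRatio_of_Ioc fun C => ?_)
    obtain ⟨x, hx, hlt⟩ := hlower (-C)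
    rw [div_lt_iff₀ (sub_pos.2 hx.1)] at hlt
    exact ⟨x, hx, by linarith⟩

theorem hasUnboundedRatio_sub_right (hab : a ≤ b) (hφ₁ : ConvexOn ℝ (Icc a b) φ₁)
    (hφ₂ : ConcaveOn ℝ (Icc a b) φ₂) (hb : φ₁ b ≤ φ₂ b)
    (hnotang : φ₁ b < φ₂ b ∨
      (∀ C : ℝ, ∃ x ∈ Ico a b, (φ₂ b - φ₂ x) / (b - x) < C) ∨
      (∀ C : ℝ, ∃ x ∈ Ico a b, C < (φ₁ b - φ₁ x) / (b - x))) :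
    HasUnboundedRatio (φ₂ - φ₁) b a := by
  rw [← segment_eq_Icc hab, segment_symm] at hφ₁ hφ₂
  rcases hnotang with hgap | hupper | hlower
  · exact hasUnboundedRatio_of_concaveOn_of_pos (hφ₂.sub hφ₁) (sub_pos.2 hgap)
  · refine hasUnboundedRatio_sub_of_upper hφ₁ hb (hasUnboundedRatio_of_Ico fun C => ?_)
    obtain ⟨x, hx, hlt⟩ := hupper (-C)
    rw [div_lt_iff₀ (sub_pos.2 hx.2)] at hlt
    exact ⟨x, hx, by linarith⟩
  · refine hasUnboundedRatio_sub_of_lower hφ₂ hb (hasUnboundedRatio_of_Ico fun C => ?_)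
    obtain ⟨x, hx, hlt⟩ := hlower C
    exact ⟨x, hx, (lt_div_iff₀ (sub_pos.2 hx.2)).1 hlt⟩

end NotAngular

section ClosedRegionBetween

/-- The closed region over `s` between the graphs of `φ₁` and `φ₂`; Mathlib's `regionBetween`
leaves the two graphs out. -/
def closedRegionBetween {X : Type*} (φ₁ φ₂ : X → ℝ) (s : Set X) : Set (X × ℝ) :=
  {z | z.1 ∈ s ∧ z.2 ∈ Icc (φ₁ z.1) (φ₂ z.1)}

theorem convex_closedRegionBetween {E : Type*} [AddCommGroup E] [Module ℝ E] {s : Set E}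
    {φ₁ φ₂ : E → ℝ} (hφ₁ : ConvexOn ℝ s φ₁) (hφ₂ : ConcaveOn ℝ s φ₂) :
    Convex ℝ (closedRegionBetween φ₁ φ₂ s) := by
  convert hφ₁.convex_epigraph.inter hφ₂.convex_hypograph using 1
  ext z
  exact and_and_left

variable {X : Type*} [TopologicalSpace X] {φ₁ φ₂ : X → ℝ} {s : Set X}

theorem interior_closedRegionBetween_subset :
    interior (closedRegionBetween φ₁ φ₂ s) ⊆ Prod.fst ⁻¹' interior s :=
  (interior_mono fun _ hz => hz.1).trans
    (isOpenMap_fst.interior_preimage_subset_preimage_interior)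

theorem mem_interior_closedRegionBetween (hφ₁ : ContinuousOn φ₁ (interior s))
    (hφ₂ : ContinuousOn φ₂ (interior s)) {z : X × ℝ} (hz : z.1 ∈ interior s)
    (hz₂ : z.2 ∈ Ioo (φ₁ z.1) (φ₂ z.1)) : z ∈ interior (closedRegionBetween φ₁ φ₂ s) := by
  have hnhds := isOpen_interior.mem_nhds hz
  have hlower := (hφ₁.continuousAt hnhds).comp continuousAt_fst (x := z)
  have hupper := (hφ₂.continuousAt hnhds).comp continuousAt_fst (x := z)
  rw [mem_interior_iff_mem_nhds]
  filter_upwards [continuousAt_fst.eventually hnhds, hlower.eventually_lt continuousAt_snd hz₂.1,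
    continuousAt_snd.eventually_lt hupper hz₂.2] with p hps hp₁ hp₂
  exact ⟨interior_subset hps, hp₁.le, hp₂.le⟩

end ClosedRegionBetween

theorem stmt_19_general {a b : ℝ} (hab : a < b) {φ₁ φ₂ : ℝ → ℝ}
    (hφ₁ : ConvexOn ℝ (Icc a b) φ₁) (hφ₂ : ConcaveOn ℝ (Icc a b) φ₂)
    (hratio : HasUnboundedRatio (φ₂ - φ₁) a b ∨ HasUnboundedRatio (φ₂ - φ₁) b a)
    {C : ℝ} (hC : 0 ≤ C) :
    ∃ u : ℝ × ℝ → ℝ, MemU (closedRegionBetween φ₁ φ₂ (Icc a b)) u ∧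
      (∃ z ∈ closedRegionBetween φ₁ φ₂ (Icc a b), u z ≠ 0) ∧
      ENNReal.ofReal C * LinfN (closedRegionBetween φ₁ φ₂ (Icc a b)) (uy u) <
        LinfN (closedRegionBetween φ₁ φ₂ (Icc a b)) (ux u) := by
  obtain ⟨e, he, x, hx, hlt⟩ : ∃ e ∉ interior (Icc a b), ∃ x ∈ interior (Icc a b),
      2 * C * dist x e < (φ₂ - φ₁) x := by
    rw [interior_Icc, ← openSegment_eq_Ioo hab]
    rcases hratio with hleft | hright
    · exact ⟨a, by simp [openSegment_eq_Ioo hab], hleft (2 * C)⟩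
    · exact ⟨b, by simp [openSegment_eq_Ioo hab], openSegment_symm ℝ b a ▸ hright (2 * C)⟩
  obtain ⟨D, hCD, hD⟩ : ∃ D, C * |x - e| < D ∧ D < (φ₂ x - φ₁ x) / 2 :=
    exists_between (by rw [Real.dist_eq, Pi.sub_apply] at hlt; linarith)
  refine exists_memU_mul_linfN_uy_lt_linfN_ux (convex_closedRegionBetween hφ₁ hφ₂) hC
    (y := (φ₁ x + φ₂ x) / 2) ?_ (fun hmem => he (interior_closedRegionBetween_subset hmem)) hCD
  rintro ⟨_, y⟩ ⟨rfl, hy⟩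
  rw [Real.closedBall_eq_Icc] at hy
  exact mem_interior_closedRegionBetween hφ₁.continuousOn_interior hφ₂.continuousOn_interior hx
    ⟨by linarith [hy.1], by linarith [hy.2]⟩

/-- Theorem 8, infinite case: if at least one vertical line of support of
`Ω` is not angular (positive gap at an endpoint, or an infinite one-sided derivative,
expressed via unbounded difference quotients), then `K_∞(Ω) = ∞`: for every `C > 0` there
is a nonzero `u ∈ 𝒰_Ω` with `‖u_x‖_∞ > C ‖u_y‖_∞`. -/
theorem stmt_19 (a b : ℝ) (hab : a < b) (φ₁ φ₂ : ℝ → ℝ)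
    (hφ₁ : ConvexOn ℝ (Icc a b) φ₁) (hφ₂ : ConcaveOn ℝ (Icc a b) φ₂)
    (hφle : ∀ x ∈ Icc a b, φ₁ x ≤ φ₂ x)
    (Ω : Set (ℝ × ℝ))
    (hΩ : Ω = {z : ℝ × ℝ | z.1 ∈ Icc a b ∧ z.2 ∈ Icc (φ₁ z.1) (φ₂ z.1)})
    (hΩc : IsCompact Ω) (hΩint : (interior Ω).Nonempty)
    (hnotang :
      φ₁ a < φ₂ a ∨ φ₁ b < φ₂ b ∨
      (∀ C : ℝ, ∃ x ∈ Ioc a b, C < (φ₂ x - φ₂ a) / (x - a)) ∨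
      (∀ C : ℝ, ∃ x ∈ Ioc a b, (φ₁ x - φ₁ a) / (x - a) < C) ∨
      (∀ C : ℝ, ∃ x ∈ Ico a b, (φ₂ b - φ₂ x) / (b - x) < C) ∨
      (∀ C : ℝ, ∃ x ∈ Ico a b, C < (φ₁ b - φ₁ x) / (b - x))) :
    ∀ C > (0 : ℝ), ∃ u : ℝ × ℝ → ℝ, MemU Ω u ∧ (∃ z ∈ Ω, u z ≠ 0) ∧
      ENNReal.ofReal C * LinfN Ω (uy u) < LinfN Ω (ux u) := by
  have hleft := hasUnboundedRatio_sub_left hab.le hφ₁ hφ₂ (hφle a (left_mem_Icc.2 hab.le))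
  have hright := hasUnboundedRatio_sub_right hab.le hφ₁ hφ₂ (hφle b (right_mem_Icc.2 hab.le))
  intro C hC
  exact hΩ ▸ stmt_19_general hab hφ₁ hφ₂ (by tauto) hC.le
end
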